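/- arXiv:1803.07946 — 2 statements merged into one kernel-verified Lean document; each statement's English description precedes it below -/
import Mathlib

section
/- (Lemma 4.2, continuity of the mountain-pass level) Assume f satisfies (f1)–(f4) with λ_p > ((p−2)/p · 2μ/(μ−2))^{(p−2)/2} · 𝒞_p^{p/2}. Then the map k ↦ m_k is continuous on (0, +∞): for every sequence k_j → k > 0 one has m_{k_j} → m_k. -/
/-! The proof rests on one scaling identity. For `u` put `v(x) = a u(θ x)`. In dimension two
`∫|∇v|² = a² ∫|∇u|²`, `∫ v² = a² θ⁻² ∫ u²`, and the superlinearity condition `t f(t) ≥ μ F(t)`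
gives `F(a t) ≥ a^μ F(t)` for `a ≥ 1`, whence `∫ F(v) ≥ a^μ θ⁻² ∫ F(u)`. For `k₁ ≤ k₂`, the choice
`θ² = k₂ / k₁` and `a² = (k₂ / k₁)^(2/(μ-2))` yields `Φ_{k₂}(v) ≤ a² Φ_{k₁}(u)`
(`Phik_scale_le`). The map `u ↦ v` therefore sends `Γ_{k₁}` into `Γ_{k₂}` and
`m_{k₂} ≤ (k₂ / k₁)^(2/(μ-2)) m_{k₁}`. On the other hand `k ↦ Φ_k(u)` is nondecreasing, so that
`Γ_{k₂} ⊆ Γ_{k₁}` and `m_{k₁} ≤ m_{k₂}`. The two inequalities squeeze `m_{k_j}` towards `m_k`.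

The integrals `∫ F(u)` must be genuine. A radial function in `MemH1` is bounded
(`radial_bounded`), being continuous near the origin and controlled away from it by the
one-dimensional inequality `|(g²)'| ≤ g² + g'²` in polar coordinates. On a bounded range
`F(t) ≤ C t²`, so `F ∘ u` is integrable (`integrable_Primitive_comp`), whatever the growth
of `f` at infinity.
-/

open MeasureTheory Real Filter Set Metric
open scoped RealInnerProductSpace Topology ENNReal

noncomputable section

/-- The plane `ℝ²`. -/
abbrev R2 := EuclideanSpace ℝ (Fin 2)

/-- `u ∈ H¹(ℝ²)`: `u` is differentiable, `u ∈ L²` and `∇u ∈ L²`. -/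
def MemH1 (u : R2 → ℝ) : Prop :=
  Differentiable ℝ u ∧ Integrable (fun x => (u x) ^ 2) ∧
    Integrable (fun x => ‖gradient u x‖ ^ 2)

/-- The squared `H¹` norm `∫ (|∇u|² + u²)`. -/
def H1normSq (u : R2 → ℝ) : ℝ := ∫ x, (‖gradient u x‖ ^ 2 + (u x) ^ 2)

/-- The `H¹` norm. -/
def H1norm (u : R2 → ℝ) : ℝ := Real.sqrt (H1normSq u)

/-- Test functions: smooth and compactly supported. -/
def IsTest (φ : R2 → ℝ) : Prop := ContDiff ℝ (⊤ : ℕ∞) φ ∧ HasCompactSupport φ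

/-- The primitive `F(t) = ∫₀ᵗ f(τ) dτ`. -/
def Primitive (f : ℝ → ℝ) (t : ℝ) : ℝ := ∫ τ in (0:ℝ)..t, f τ

/-- (f1): `f(t)/t → 0` as `t → 0`. -/
def Cond_f1 (f : ℝ → ℝ) : Prop := Tendsto (fun t => f t / t) (𝓝[≠] (0:ℝ)) (𝓝 0)

/-- (f2): critical Trudinger–Moser growth of exponent `4π`. -/
def Cond_f2 (f : ℝ → ℝ) : Prop :=
  (∀ α : ℝ, 4 * π < α →
      Tendsto (fun s => f s / (Real.exp (α * s ^ 2) - 1)) atTop (𝓝 0)) ∧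
  (∀ α : ℝ, 0 < α → α < 4 * π →
      Tendsto (fun s => f s / (Real.exp (α * s ^ 2) - 1)) atTop atTop)

/-- (f3) with parameter `μ`: `t f(t) ≥ μ F(t) > 0` for `t ≠ 0`. -/
def Cond_f3 (f : ℝ → ℝ) (μ : ℝ) : Prop :=
  ∀ t : ℝ, t ≠ 0 → μ * Primitive f t ≤ t * f t ∧ 0 < Primitive f t

/-- (f4) with parameters `p, λₚ`: `f(t) ≥ λₚ t^(p-1)` for `t > 0`. -/
def Cond_f4 (f : ℝ → ℝ) (p lp : ℝ) : Prop :=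
  ∀ t : ℝ, 0 < t → lp * t ^ (p - 1) ≤ f t

/-- `C` is a constant for the Sobolev embedding `H¹(ℝ²) ↪ Lᵖ(ℝ²)`. -/
def SobolevIneq (p C : ℝ) : Prop :=
  ∀ u : R2 → ℝ, MemH1 u →
    C * (∫ x, |u x| ^ p) ^ (2 / p) ≤ ∫ x, (‖gradient u x‖ ^ 2 + (u x) ^ 2)

/-- `Cp` is the best (largest) Sobolev constant. -/
def IsBestSobolev (p Cp : ℝ) : Prop := IsGreatest {C : ℝ | SobolevIneq p C} Cp

/-- (V0): `0 < α₁ ≤ V(x) ≤ α₂`, with `V` continuous. -/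
def CondV0 (V : R2 → ℝ) (a1 a2 : ℝ) : Prop :=
  Continuous V ∧ 0 < a1 ∧ ∀ x, a1 ≤ V x ∧ V x ≤ a2

/-- (V1): `V(0)=1`, `V` is `C¹` near `0` and `0` is an isolated local maximum point. -/
def CondV1 (V : R2 → ℝ) : Prop :=
  V 0 = 1 ∧ (∃ U ∈ 𝓝 (0 : R2), ContDiffOn ℝ 1 V U) ∧
    ∃ r > 0, ∀ x ∈ ball (0 : R2) r, x ≠ 0 → V x < V 0

/-- The Hessian bilinear form of `V` at `0`. -/
def Hess (V : R2 → ℝ) (v w : R2) : ℝ := fderiv ℝ (fun y => fderiv ℝ V y v) 0 w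

/-- (V2): `V(0)=1`, `V` is `C²` near `0` and `0` is a nondegenerate saddle point. -/
def CondV2 (V : R2 → ℝ) : Prop :=
  V 0 = 1 ∧ (∃ U ∈ 𝓝 (0 : R2), ContDiffOn ℝ 2 V U) ∧
    fderiv ℝ V 0 = 0 ∧
    (∀ v : R2, v ≠ 0 → ∃ w : R2, Hess V v w ≠ 0) ∧
    (∃ v : R2, 0 < Hess V v v) ∧ (∃ w : R2, Hess V w w < 0)

/-- (V3): `V(0)=1`, `V` is `C¹` near `0`, `0` is an isolated critical point, and there is
a subspace `E` with `V|_E` having a local max and `V|_{E^⊥}` a local min at `0`. -/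
def CondV3 (V : R2 → ℝ) : Prop :=
  V 0 = 1 ∧ (∃ U ∈ 𝓝 (0 : R2), ContDiffOn ℝ 1 V U) ∧
    fderiv ℝ V 0 = 0 ∧
    (∃ r > 0, ∀ x ∈ ball (0 : R2) r, x ≠ 0 → fderiv ℝ V x ≠ 0) ∧
    ∃ E : Submodule ℝ R2, IsLocalMaxOn V (E : Set R2) 0 ∧ IsLocalMinOn V (Eᗮ : Set R2) 0

/-- Weak solution of the limit equation `-Δu + u = f(u)` on `ℝ²`. -/
def IsWeakSolLimit (f : ℝ → ℝ) (u : R2 → ℝ) : Prop :=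
  ∀ φ : R2 → ℝ, IsTest φ →
    (∫ x, (⟪gradient u x, gradient φ x⟫ + u x * φ x)) = ∫ x, f (u x) * φ x

/-- The limit energy functional `Φ(u) = ½∫(|∇u|²+u²) - ∫F(u)`. -/
def Phi (f : ℝ → ℝ) (u : R2 → ℝ) : ℝ :=
  (1 / 2) * (∫ x, (‖gradient u x‖ ^ 2 + (u x) ^ 2)) - ∫ x, Primitive f (u x)

/-- Ground state solution of `-Δu + u = f(u)`. -/
def IsGroundState (f : ℝ → ℝ) (U : R2 → ℝ) : Prop :=
  MemH1 U ∧ (∀ x, 0 < U x) ∧ IsWeakSolLimit f U ∧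
    ∀ w : R2 → ℝ, MemH1 w → (∃ x, w x ≠ 0) → IsWeakSolLimit f w → Phi f U ≤ Phi f w

/-- The truncated nonlinearity `f̃ = min{f(t), a t}` for `t ≥ 0`, `0` for `t < 0`. -/
def ftil (f : ℝ → ℝ) (a t : ℝ) : ℝ := if 0 ≤ t then min (f t) (a * t) else 0

/-- The cut-off function `χ`. -/
def cutoff (Ra Rb : ℝ) (x : R2) : ℝ :=
  if ‖x‖ ≤ Ra then 1 else if ‖x‖ ≤ Rb then (Rb - ‖x‖) / (Rb - Ra) else 0

/-- `g_ε(x,t) = χ(εx) f(t) + (1-χ(εx)) f̃(t)`. -/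
def geps (f : ℝ → ℝ) (a Ra Rb ε : ℝ) (x : R2) (t : ℝ) : ℝ :=
  cutoff Ra Rb (ε • x) * f t + (1 - cutoff Ra Rb (ε • x)) * ftil f a t

/-- `G_ε(x,t) = ∫₀ᵗ g_ε(x,τ) dτ`. -/
def Geps (f : ℝ → ℝ) (a Ra Rb ε : ℝ) (x : R2) (t : ℝ) : ℝ :=
  ∫ τ in (0:ℝ)..t, geps f a Ra Rb ε x τ

/-- The truncated functional `Ĩ_ε`. -/
def Itil (V : R2 → ℝ) (f : ℝ → ℝ) (a Ra Rb ε : ℝ) (u : R2 → ℝ) : ℝ :=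
  (1 / 2) * (∫ x, (‖gradient u x‖ ^ 2 + V (ε • x) * (u x) ^ 2)) -
    ∫ x, Geps f a Ra Rb ε x (u x)

/-- Radially symmetric function. -/
def Radial (v : R2 → ℝ) : Prop := ∀ x y : R2, ‖x‖ = ‖y‖ → v x = v y

/-- Weak convergence in `H¹(ℝ²)`: boundedness plus convergence of the `H¹` pairings
against all test functions. -/
def WeakConvH1 (v : ℕ → R2 → ℝ) (w : R2 → ℝ) : Prop :=
  (∃ M : ℝ, ∀ n, H1norm (v n) ≤ M) ∧
    ∀ φ : R2 → ℝ, IsTest φ →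
      Tendsto (fun n => ∫ x, (⟪gradient (v n) x, gradient φ x⟫ + v n x * φ x)) atTop
        (𝓝 (∫ x, (⟪gradient w x, gradient φ x⟫ + w x * φ x)))

/-- `Φ_k(u) = ½∫(|∇u|² + k u²) - ∫ F(u)`. -/
def Phik (f : ℝ → ℝ) (k : ℝ) (u : R2 → ℝ) : ℝ :=
  (1 / 2) * (∫ x, (‖gradient u x‖ ^ 2 + k * (u x) ^ 2)) - ∫ x, Primitive f (u x)

/-- The admissible paths for the radial mountain-pass level `m_k`. -/
def InGamma (f : ℝ → ℝ) (k : ℝ) (γ : ℝ → R2 → ℝ) : Prop :=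
  (∀ t ∈ Icc (0:ℝ) 1, MemH1 (γ t) ∧ Radial (γ t)) ∧
    (∀ t₀ ∈ Icc (0:ℝ) 1, ∀ δ > 0, ∃ η > 0, ∀ t ∈ Icc (0:ℝ) 1,
      |t - t₀| < η → H1norm (fun x => γ t x - γ t₀ x) < δ) ∧
    (∀ x, γ 0 x = 0) ∧ Phik f k (γ 1) < 0

/-- The mountain-pass level `m_k = inf_{γ ∈ Γ_k} max_{t ∈ [0,1]} Φ_k(γ(t))`. -/
def mpLevel (f : ℝ → ℝ) (k : ℝ) : ℝ :=
  sInf {c : ℝ | ∃ γ : ℝ → R2 → ℝ, InGamma f k γ ∧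
    c = sSup ((fun t => Phik f k (γ t)) '' Icc (0:ℝ) 1)}

/-- Weak solution of `-ε²Δv + V(x)v = f(v)` on `ℝ²`. -/
def IsWeakSolP (V : R2 → ℝ) (f : ℝ → ℝ) (ε : ℝ) (u : R2 → ℝ) : Prop :=
  ∀ φ : R2 → ℝ, IsTest φ →
    ε ^ 2 * (∫ x, ⟪gradient u x, gradient φ x⟫) + (∫ x, V x * u x * φ x) =
      ∫ x, f (u x) * φ x

lemma norm_gradient_eq (u : R2 → ℝ) (x : R2) : ‖gradient u x‖ = ‖fderiv ℝ u x‖ := by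
  simp [gradient]

lemma measurable_gradSq (u : R2 → ℝ) : Measurable (fun x => ‖gradient u x‖ ^ 2) := by
  simp_rw [norm_gradient_eq]
  exact (measurable_fderiv ℝ u).norm.pow_const 2

/-! ### The primitive -/

lemma Primitive_zero (f : ℝ → ℝ) : Primitive f 0 = 0 := by simp [Primitive]

lemma Primitive_nonneg {f : ℝ → ℝ} {μ : ℝ} (hf3 : Cond_f3 f μ) (t : ℝ) : 0 ≤ Primitive f t := by
  by_cases h : t = 0
  · simp [h, Primitive_zero]
  · exact (hf3 t h).2.le

lemma hasDerivAt_Primitive {f : ℝ → ℝ} (hfc : Continuous f) (t : ℝ) :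
    HasDerivAt (Primitive f) (f t) t :=
  intervalIntegral.integral_hasDerivAt_right (hfc.intervalIntegrable _ _)
    (hfc.stronglyMeasurableAtFilter _ _) hfc.continuousAt

lemma continuous_Primitive {f : ℝ → ℝ} (hfc : Continuous f) : Continuous (Primitive f) :=
  continuous_iff_continuousAt.2 fun t => (hasDerivAt_Primitive hfc t).continuousAt

/-- The function `s ↦ F(s t) s^{-μ}` is nondecreasing on `[1, ∞)`, by (f3). -/
lemma Primitive_scale {f : ℝ → ℝ} {μ : ℝ} (hfc : Continuous f) (hf3 : Cond_f3 f μ)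
    {a : ℝ} (ha : 1 ≤ a) (t : ℝ) : a ^ μ * Primitive f t ≤ Primitive f (a * t) := by
  by_cases ht : t = 0
  · simp [ht, Primitive_zero]
  have hd : ∀ s : ℝ, 0 < s → HasDerivAt (fun s => Primitive f (s * t) * s ^ (-μ))
      (f (s * t) * t * s ^ (-μ) + Primitive f (s * t) * (-μ * s ^ (-μ - 1))) s := by
    intro s hs
    have h1 : HasDerivAt (fun s => Primitive f (s * t)) (f (s * t) * t) s := by
      have h2 : HasDerivAt (fun s : ℝ => s * t) t s := by
        simpa using (hasDerivAt_id s).mul_const t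
      exact (hasDerivAt_Primitive hfc (s * t)).comp s h2
    exact h1.mul (Real.hasDerivAt_rpow_const (Or.inl hs.ne'))
  have hmono : MonotoneOn (fun s => Primitive f (s * t) * s ^ (-μ)) (Ici (1:ℝ)) := by
    apply monotoneOn_of_deriv_nonneg (convex_Ici 1)
    · intro s hs
      exact (hd s (lt_of_lt_of_le one_pos hs)).continuousAt.continuousWithinAt
    · intro s hs
      rw [interior_Ici] at hs
      exact (hd s (one_pos.trans hs)).differentiableAt.differentiableWithinAt
    · intro s hs
      rw [interior_Ici] at hs
      have hs0 : (0:ℝ) < s := one_pos.trans hs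
      rw [(hd s hs0).deriv]
      have h3 := (hf3 (s * t) (mul_ne_zero hs0.ne' ht)).1
      have e : s ^ (-μ) = s ^ (-μ - 1) * s := by
        rw [Real.rpow_sub_one hs0.ne']; field_simp
      rw [e]
      have hp : 0 < s ^ (-μ - 1) := Real.rpow_pos_of_pos hs0 _
      nlinarith [mul_nonneg hp.le (sub_nonneg.2 h3)]
  have h := hmono (self_mem_Ici (a := (1:ℝ))) (show a ∈ Ici (1:ℝ) from ha) ha
  have ha0 : 0 < a := one_pos.trans_le ha
  simp only [one_mul, Real.one_rpow, mul_one] at h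
  rw [Real.rpow_neg ha0.le, ← div_eq_mul_inv, le_div_iff₀ (Real.rpow_pos_of_pos ha0 _)] at h
  linarith

/-- On a bounded range `F` is at most quadratic: apply `Primitive_scale` with `a = M / |t|`. -/
lemma Primitive_le_sq {f : ℝ → ℝ} {μ : ℝ} (hμ : 2 < μ) (hfc : Continuous f)
    (hf3 : Cond_f3 f μ) {M : ℝ} (hM : 0 < M) {t : ℝ} (ht : |t| ≤ M) :
    Primitive f t ≤ (Primitive f M + Primitive f (-M)) / M ^ 2 * t ^ 2 := by
  by_cases h0 : t = 0
  · simp [h0, Primitive_zero]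
  have hpos : 0 < |t| := abs_pos.2 h0
  have ha : 1 ≤ M / |t| := (one_le_div hpos).2 ht
  have h1 := Primitive_scale hfc hf3 ha t
  have h2 : Primitive f (M / |t| * t) ≤ Primitive f M + Primitive f (-M) := by
    rcases lt_or_gt_of_ne h0 with h | h
    · have : M / |t| * t = -M := by rw [abs_of_neg h]; field_simp
      rw [this]; linarith [Primitive_nonneg hf3 M]
    · have : M / |t| * t = M := by rw [abs_of_pos h]; field_simp
      rw [this]; linarith [Primitive_nonneg hf3 (-M)]
  have h3 : (M / |t|) ^ (2:ℝ) ≤ (M / |t|) ^ μ := Real.rpow_le_rpow_of_exponent_le ha hμ.le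
  rw [Real.rpow_two, div_pow, sq_abs] at h3
  have h4 : M ^ 2 / t ^ 2 * Primitive f t ≤ Primitive f M + Primitive f (-M) :=
    (mul_le_mul_of_nonneg_right h3 (Primitive_nonneg hf3 t)).trans (h1.trans h2)
  have hM2 : 0 < M ^ 2 := by positivity
  have ht2 : 0 < t ^ 2 := by positivity
  rw [div_mul_eq_mul_div, div_le_iff₀ ht2] at h4
  rw [div_mul_eq_mul_div, le_div_iff₀ hM2]
  linarith

/-! ### Radial functions -/

/-- A radial function of class `MemH1` is bounded: writing `u(x) = g(|x|)`, one has
`g(R)² ≤ g(1)² + ∫_1^∞ (g² + g'²) s ds` for `R ≥ 1`. -/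
lemma radial_bounded {u : R2 → ℝ} (hu : MemH1 u) (hr : Radial u) :
    ∃ M : ℝ, 0 < M ∧ ∀ x, |u x| ≤ M := by
  obtain ⟨hd, h2, hg2⟩ := hu
  obtain ⟨e, he⟩ : ∃ e : R2, ‖e‖ = 1 := exists_norm_eq R2 zero_le_one
  set g : ℝ → ℝ := fun r => u (r • e) with hg
  have hgd : Differentiable ℝ g := hd.comp (differentiable_id.smul_const e)
  have hug : ∀ x, u x = g ‖x‖ := fun x => hr _ _ (by simp [norm_smul, he])
  have hderiv : ∀ x : R2, x ≠ 0 → |deriv g ‖x‖| ≤ ‖gradient u x‖ := by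
    intro x hx
    have hx0 : 0 < ‖x‖ := norm_pos_iff.2 hx
    set w : R2 := ‖x‖⁻¹ • x with hw
    have hwn : ‖w‖ = 1 := by rw [hw, norm_smul, norm_inv, norm_norm, inv_mul_cancel₀ hx0.ne']
    have hev : g =ᶠ[𝓝 ‖x‖] fun r => u (r • w) := by
      filter_upwards [lt_mem_nhds hx0] with r _
      exact hr _ _ (by simp [norm_smul, he, hwn])
    have hxw : ‖x‖ • w = x := by rw [hw, smul_smul, mul_inv_cancel₀ hx0.ne', one_smul]
    have h1 : HasDerivAt (fun r : ℝ => u (r • w)) (fderiv ℝ u x w) ‖x‖ := by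
      have h2 : HasDerivAt (fun r : ℝ => r • w) w ‖x‖ := by
        simpa using (hasDerivAt_id ‖x‖).smul_const w
      have h3 : HasFDerivAt u (fderiv ℝ u x) (‖x‖ • w) := by
        rw [hxw]; exact (hd x).hasFDerivAt
      exact h3.comp_hasDerivAt _ h2
    rw [hev.deriv_eq, h1.deriv, norm_gradient_eq, ← Real.norm_eq_abs]
    simpa [hwn] using (fderiv ℝ u x).le_opNorm w
  have hint : Integrable (fun x : R2 => (fun r => g r ^ 2 + deriv g r ^ 2) ‖x‖) := by
    apply Integrable.mono' (h2.add hg2)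
    · exact (((hgd.continuous.measurable.pow_const 2).add
        ((measurable_deriv g).pow_const 2)).comp measurable_norm).aestronglyMeasurable
    · have : ∀ᵐ x : R2, x ≠ 0 := by
        simp [ae_iff]
      filter_upwards [this] with x hx
      have := hderiv x hx
      have h5 : deriv g ‖x‖ ^ 2 ≤ ‖gradient u x‖ ^ 2 := by
        rw [← sq_abs]; gcongr
      simp only [Pi.add_apply]
      rw [Real.norm_of_nonneg (by positivity), hug x]
      linarith
  have hpolar := (integrable_fun_norm_addHaar (volume : Measure R2)
    (f := fun r => g r ^ 2 + deriv g r ^ 2)).1 hint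
  simp only [finrank_euclideanSpace, Fintype.card_fin, Nat.add_one_sub_one, pow_one,
    smul_eq_mul] at hpolar
  have hI1 : IntegrableOn (fun r => g r ^ 2 + deriv g r ^ 2) (Ioi 1) := by
    apply Integrable.mono' (hpolar.mono_set (Ioi_subset_Ioi zero_le_one))
    · exact ((hgd.continuous.measurable.pow_const 2).add
        ((measurable_deriv g).pow_const 2)).aestronglyMeasurable
    · filter_upwards [ae_restrict_mem measurableSet_Ioi] with r hr1
      have hr1 : (1:ℝ) < r := hr1
      rw [Real.norm_of_nonneg (by positivity)]
      nlinarith [sq_nonneg (g r), sq_nonneg (deriv g r)]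
  set K := ∫ r in Ioi (1:ℝ), (g r ^ 2 + deriv g r ^ 2) with hK
  have hfar : ∀ R, 1 ≤ R → g R ^ 2 ≤ g 1 ^ 2 + K := by
    intro R hR
    have hII : IntegrableOn (fun r => g r ^ 2 + deriv g r ^ 2) (Ioc 1 R) :=
      hI1.mono_set Ioc_subset_Ioi_self
    have hle : ∀ r, ‖2 * g r * deriv g r‖ ≤ g r ^ 2 + deriv g r ^ 2 := by
      intro r
      rw [Real.norm_eq_abs, abs_le]
      constructor <;> nlinarith [sq_nonneg (g r - deriv g r), sq_nonneg (g r + deriv g r)]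
    have hI2 : IntervalIntegrable (fun r => 2 * g r * deriv g r) volume 1 R := by
      rw [intervalIntegrable_iff_integrableOn_Ioc_of_le hR]
      apply Integrable.mono' hII
      · exact ((hgd.continuous.measurable.const_mul 2).mul
          (measurable_deriv g)).aestronglyMeasurable
      · exact Eventually.of_forall hle
    have hftc : ∫ r in (1:ℝ)..R, 2 * g r * deriv g r = g R ^ 2 - g 1 ^ 2 := by
      apply intervalIntegral.integral_eq_sub_of_hasDerivAt _ hI2
      intro r _
      have h := (hgd r).hasDerivAt.fun_pow 2
      simp only [Nat.cast_ofNat, Nat.add_one_sub_one, pow_one] at h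
      exact h
    have hb : ∫ r in (1:ℝ)..R, 2 * g r * deriv g r ≤ K := by
      rw [intervalIntegral.integral_of_le hR]
      calc ∫ r in Ioc 1 R, 2 * g r * deriv g r
          ≤ ∫ r in Ioc 1 R, (g r ^ 2 + deriv g r ^ 2) := by
            apply integral_mono _ hII (fun r => (le_abs_self _).trans (hle r))
            exact (intervalIntegrable_iff_integrableOn_Ioc_of_le hR).1 hI2
        _ ≤ K := setIntegral_mono_set hI1
            (Eventually.of_forall fun r => by positivity)
            Ioc_subset_Ioi_self.eventuallyLE
    linarith
  obtain ⟨B, hB⟩ := (isCompact_Icc (a := (0:ℝ)) (b := 1)).exists_bound_of_continuousOn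
    hgd.continuous.continuousOn
  refine ⟨|B| + √(g 1 ^ 2 + K) + 1, by positivity, fun x => ?_⟩
  rw [hug x]
  rcases le_total ‖x‖ 1 with h | h
  · have := hB ‖x‖ ⟨norm_nonneg x, h⟩
    rw [Real.norm_eq_abs] at this
    linarith [le_abs_self B, Real.sqrt_nonneg (g 1 ^ 2 + K)]
  · have := Real.abs_le_sqrt (hfar _ h)
    linarith [abs_nonneg B]

lemma integrable_Primitive_comp {f : ℝ → ℝ} {μ : ℝ} (hμ : 2 < μ) (hfc : Continuous f)
    (hf3 : Cond_f3 f μ) {u : R2 → ℝ} (hu : MemH1 u) (hr : Radial u) :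
    Integrable (fun x => Primitive f (u x)) := by
  obtain ⟨M, hM, hb⟩ := radial_bounded hu hr
  apply Integrable.mono' (hu.2.1.const_mul ((Primitive f M + Primitive f (-M)) / M ^ 2))
  · exact ((continuous_Primitive hfc).comp hu.1.continuous).aestronglyMeasurable
  · refine Eventually.of_forall fun x => ?_
    rw [Real.norm_of_nonneg (Primitive_nonneg hf3 _)]
    exact Primitive_le_sq hμ hfc hf3 hM (hb x)

/-! ### The space `H¹` and dilations -/

lemma H1normSq_nonneg (u : R2 → ℝ) : 0 ≤ H1normSq u :=
  integral_nonneg fun x => by positivity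

lemma MemH1.integrable {u : R2 → ℝ} (hu : MemH1 u) (k : ℝ) :
    Integrable (fun x => ‖gradient u x‖ ^ 2 + k * u x ^ 2) :=
  hu.2.2.add (hu.2.1.const_mul k)

lemma H1normSq_eq {u : R2 → ℝ} (hu : MemH1 u) :
    H1normSq u = (∫ x, ‖gradient u x‖ ^ 2) + ∫ x, u x ^ 2 :=
  integral_add hu.2.2 hu.2.1

lemma Phik_eq (f : ℝ → ℝ) (k : ℝ) {u : R2 → ℝ} (hu : MemH1 u) :
    Phik f k u = (1 / 2) * ((∫ x, ‖gradient u x‖ ^ 2) + k * ∫ x, u x ^ 2)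
      - ∫ x, Primitive f (u x) := by
  rw [Phik, integral_add hu.2.2 (hu.2.1.const_mul k), integral_const_mul]

lemma MemH1.sub {u v : R2 → ℝ} (hu : MemH1 u) (hv : MemH1 v) :
    MemH1 (fun x => u x - v x) := by
  refine ⟨hu.1.sub hv.1, ?_, ?_⟩
  · apply Integrable.mono' ((hu.2.1.const_mul 2).add (hv.2.1.const_mul 2))
    · exact ((hu.1.continuous.sub hv.1.continuous).pow 2).aestronglyMeasurable
    · refine Eventually.of_forall fun x => ?_
      simp only [Pi.add_apply]
      rw [Real.norm_of_nonneg (by positivity)]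
      nlinarith [sq_nonneg (u x + v x)]
  · apply Integrable.mono' ((hu.2.2.const_mul 2).add (hv.2.2.const_mul 2))
    · exact (measurable_gradSq _).aestronglyMeasurable
    · refine Eventually.of_forall fun x => ?_
      simp only [Pi.add_apply, norm_gradient_eq]
      rw [Real.norm_of_nonneg (by positivity), fderiv_fun_sub (hu.1 x) (hv.1 x)]
      have := norm_sub_le (fderiv ℝ u x) (fderiv ℝ v x)
      have h2 : ‖fderiv ℝ u x - fderiv ℝ v x‖ ^ 2 ≤ (‖fderiv ℝ u x‖ + ‖fderiv ℝ v x‖) ^ 2 := by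
        gcongr
      nlinarith [sq_nonneg (‖fderiv ℝ u x‖ - ‖fderiv ℝ v x‖)]

lemma H1normSq_le {u v : R2 → ℝ} (hu : MemH1 u) (hv : MemH1 v) :
    H1normSq u ≤ 2 * H1normSq (fun x => u x - v x) + 2 * H1normSq v := by
  have hs := hu.sub hv
  unfold H1normSq
  have h1 : Integrable (fun x => 2 * (‖gradient (fun x => u x - v x) x‖ ^ 2 + (u x - v x) ^ 2)) :=
    (hs.2.2.add hs.2.1).const_mul 2
  have h2 : Integrable (fun x => 2 * (‖gradient v x‖ ^ 2 + v x ^ 2)) :=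
    (hv.2.2.add hv.2.1).const_mul 2
  rw [← integral_const_mul, ← integral_const_mul, ← integral_add h1 h2]
  apply integral_mono (hu.2.2.add hu.2.1) (h1.add h2)
  intro x
  simp only [norm_gradient_eq, Pi.add_apply]
  rw [fderiv_fun_sub (hu.1 x) (hv.1 x)]
  have := norm_add_le (fderiv ℝ u x - fderiv ℝ v x) (fderiv ℝ v x)
  rw [sub_add_cancel] at this
  have h2 : ‖fderiv ℝ u x‖ ^ 2 ≤ (‖fderiv ℝ u x - fderiv ℝ v x‖ + ‖fderiv ℝ v x‖) ^ 2 := by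
    gcongr
  nlinarith [sq_nonneg (‖fderiv ℝ u x - fderiv ℝ v x‖ - ‖fderiv ℝ v x‖),
    sq_nonneg (u x - v x - v x)]

/-- The dilation `x ↦ a u(θ x)`. -/
def dil (a θ : ℝ) (u : R2 → ℝ) : R2 → ℝ := fun x => a * u (θ • x)

lemma gradSq_dil (a θ : ℝ) {u : R2 → ℝ} (hu : Differentiable ℝ u) (x : R2) :
    ‖gradient (dil a θ u) x‖ ^ 2 = a ^ 2 * θ ^ 2 * ‖gradient u (θ • x)‖ ^ 2 := by
  have h : HasFDerivAt (dil a θ u) (a • (θ • fderiv ℝ u (θ • x))) x := by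
    have h1 : HasFDerivAt (fun x : R2 => u (θ • x)) (θ • fderiv ℝ u (θ • x)) x := by
      have h2 : HasFDerivAt (fun x : R2 => θ • x) (θ • ContinuousLinearMap.id ℝ R2) x :=
        (hasFDerivAt_id x).const_smul θ
      have h3 := (hu (θ • x)).hasFDerivAt.comp x h2
      have e : fderiv ℝ u (θ • x) ∘SL (θ • ContinuousLinearMap.id ℝ R2) =
          θ • fderiv ℝ u (θ • x) := by
        ext v
        simp
      rw [e] at h3
      exact h3
    exact h1.const_mul a
  rw [norm_gradient_eq, norm_gradient_eq, h.fderiv, norm_smul, norm_smul, mul_pow, mul_pow,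
    Real.norm_eq_abs, Real.norm_eq_abs, sq_abs, sq_abs, mul_assoc]

lemma integral_comp_dil {θ : ℝ} (h : R2 → ℝ) :
    ∫ x, h (θ • x) = (θ ^ 2)⁻¹ * ∫ x, h x := by
  rw [Measure.integral_comp_smul]
  simp

lemma MemH1.dil {a θ : ℝ} (hθ : 0 < θ) {u : R2 → ℝ} (hu : MemH1 u) : MemH1 (dil a θ u) := by
  refine ⟨?_, ?_, ?_⟩
  · exact (hu.1.comp (differentiable_id.const_smul θ)).const_mul a
  · have := (hu.2.1.comp_smul hθ.ne').const_mul (a ^ 2)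
    simpa only [_root_.dil, mul_pow] using this
  · simp_rw [gradSq_dil a θ hu.1]
    exact (hu.2.2.comp_smul hθ.ne').const_mul (a ^ 2 * θ ^ 2)

lemma Radial.dil {a θ : ℝ} {u : R2 → ℝ} (hr : Radial u) : Radial (dil a θ u) := by
  intro x y hxy
  simp only [_root_.dil]
  rw [hr (θ • x) (θ • y) (by simp [norm_smul, hxy])]

/-- The Dirichlet integral is invariant under planar dilations, up to the amplitude. -/
lemma integral_gradSq_dil {a θ : ℝ} (hθ : 0 < θ) {u : R2 → ℝ} (hu : MemH1 u) :
    ∫ x, ‖gradient (dil a θ u) x‖ ^ 2 = a ^ 2 * ∫ x, ‖gradient u x‖ ^ 2 := by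
  simp_rw [gradSq_dil a θ hu.1]
  rw [integral_const_mul, integral_comp_dil (fun x => ‖gradient u x‖ ^ 2)]
  field_simp

lemma integral_sq_dil (a θ : ℝ) (u : R2 → ℝ) :
    ∫ x, dil a θ u x ^ 2 = a ^ 2 * ((θ ^ 2)⁻¹ * ∫ x, u x ^ 2) := by
  simp_rw [dil, mul_pow]
  rw [integral_const_mul, integral_comp_dil (fun x => u x ^ 2)]

lemma H1norm_dil_le {a θ : ℝ} (ha : 0 ≤ a) (hθ : 1 ≤ θ) {u : R2 → ℝ} (hu : MemH1 u) :
    H1norm (dil a θ u) ≤ a * H1norm u := by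
  have hθ0 : 0 < θ := one_pos.trans_le hθ
  rw [H1norm, H1norm, ← Real.sqrt_sq ha, ← Real.sqrt_mul (sq_nonneg a), Real.sqrt_sq ha]
  apply Real.sqrt_le_sqrt
  rw [H1normSq_eq (hu.dil hθ0), H1normSq_eq hu, integral_gradSq_dil hθ0 hu, integral_sq_dil,
    mul_add]
  gcongr
  have h1 : (θ ^ 2)⁻¹ ≤ 1 := inv_le_one_of_one_le₀ (one_le_pow₀ hθ)
  have h2 : 0 ≤ ∫ x, u x ^ 2 := integral_nonneg fun x => sq_nonneg _
  nlinarith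

/-- The key scaling inequality `Φ_{k₂}(a u(θ ·)) ≤ a² Φ_{k₁}(u)`. -/
lemma Phik_scale_le {f : ℝ → ℝ} {μ : ℝ} (hμ : 2 < μ) (hfc : Continuous f) (hf3 : Cond_f3 f μ)
    {k₁ k₂ a θ : ℝ} (hk₁ : 0 < k₁) (hk₂ : 0 < k₂) (ha : 1 ≤ a) (hθ : 0 < θ)
    (hθk : θ ^ 2 = k₂ / k₁) (hak : a ^ μ = a ^ 2 * θ ^ 2)
    {u : R2 → ℝ} (hu : MemH1 u) (hr : Radial u) :
    Phik f k₂ (dil a θ u) ≤ a ^ 2 * Phik f k₁ u := by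
  have hau : Integrable (fun x => Primitive f (a * u x)) := by
    have := integrable_Primitive_comp hμ hfc hf3 (hu.dil (a := a) one_pos) hr.dil
    simpa only [dil, one_smul] using this
  have hF : a ^ μ * ∫ x, Primitive f (u x) ≤ ∫ x, Primitive f (a * u x) := by
    rw [← integral_const_mul]
    exact integral_mono ((integrable_Primitive_comp hμ hfc hf3 hu hr).const_mul _) hau
      fun x => Primitive_scale hfc hf3 ha (u x)
  have hFd : ∫ x, Primitive f (dil a θ u x) = (θ ^ 2)⁻¹ * ∫ x, Primitive f (a * u x) :=
    integral_comp_dil (fun x => Primitive f (a * u x))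
  have hθ2 : 0 < θ ^ 2 := by positivity
  have hF2 : a ^ 2 * ∫ x, Primitive f (u x) ≤ (θ ^ 2)⁻¹ * ∫ x, Primitive f (a * u x) := by
    rw [inv_mul_eq_div, le_div_iff₀ hθ2]
    rw [hak] at hF
    linarith
  have hk : k₂ * (θ ^ 2)⁻¹ = k₁ := by rw [hθk]; field_simp
  rw [Phik_eq f k₂ (hu.dil hθ), Phik_eq f k₁ hu, integral_gradSq_dil hθ hu, integral_sq_dil, hFd]
  have : k₂ * (a ^ 2 * ((θ ^ 2)⁻¹ * ∫ x, u x ^ 2)) = a ^ 2 * (k₁ * ∫ x, u x ^ 2) := by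
    rw [← hk]; ring
  rw [this]
  linarith

/-! ### Mountain-pass levels -/

/-- The energy is bounded above along an admissible path, so that the supremum in `mpLevel`
is not a junk value. -/
lemma bddAbove_path {f : ℝ → ℝ} {μ : ℝ} (hf3 : Cond_f3 f μ) {k : ℝ} (hk : 0 < k)
    {γ : ℝ → R2 → ℝ} (hγ : InGamma f k γ) :
    BddAbove ((fun t => Phik f k (γ t)) '' Icc (0:ℝ) 1) := by
  have hloc : ∃ B : ℝ, ∀ t ∈ Icc (0:ℝ) 1, H1normSq (γ t) ≤ B := by
    have hP : ∃ B : ℝ, ∀ t ∈ Icc (0:ℝ) 1, t ∈ Icc (0:ℝ) 1 → H1normSq (γ t) ≤ B := by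
      apply isCompact_Icc.induction_on
        (p := fun s => ∃ B : ℝ, ∀ t ∈ s, t ∈ Icc (0:ℝ) 1 → H1normSq (γ t) ≤ B)
      · exact ⟨0, fun t ht => absurd ht (notMem_empty t)⟩
      · rintro s s' hss ⟨B, hB⟩
        exact ⟨B, fun t ht => hB t (hss ht)⟩
      · rintro s s' ⟨B, hB⟩ ⟨B', hB'⟩
        refine ⟨max B B', fun t ht h01 => ?_⟩
        rcases ht with ht | ht
        · exact (hB t ht h01).trans (le_max_left _ _)
        · exact (hB' t ht h01).trans (le_max_right _ _)
      · intro t₀ ht₀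
        obtain ⟨η, hη, hc⟩ := hγ.2.1 t₀ ht₀ 1 one_pos
        refine ⟨ball t₀ η, mem_nhdsWithin_of_mem_nhds (ball_mem_nhds _ hη),
          2 * 1 + 2 * H1normSq (γ t₀), fun t ht h01 => ?_⟩
        have h1 := hc t h01 (by simpa [Real.dist_eq] using ht)
        have h2 := H1normSq_le (hγ.1 t h01).1 (hγ.1 t₀ ht₀).1
        rw [H1norm, Real.sqrt_lt' one_pos, one_pow] at h1
        linarith
    obtain ⟨B, hB⟩ := hP
    exact ⟨B, fun t ht => hB t ht ht⟩
  obtain ⟨B, hB⟩ := hloc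
  refine ⟨1 / 2 * ((1 + k) * B), ?_⟩
  rintro _ ⟨t, ht, rfl⟩
  have hm := (hγ.1 t ht).1
  have hF : 0 ≤ ∫ x, Primitive f (γ t x) := integral_nonneg fun x => Primitive_nonneg hf3 _
  have h1 : 0 ≤ ∫ x, ‖gradient (γ t) x‖ ^ 2 := integral_nonneg fun x => sq_nonneg _
  have h2 : 0 ≤ ∫ x, γ t x ^ 2 := integral_nonneg fun x => sq_nonneg _
  have h3 := hB t ht
  rw [H1normSq_eq hm] at h3
  simp only [Phik_eq f k hm]
  nlinarith

lemma sup_nonneg {f : ℝ → ℝ} {μ : ℝ} (hf3 : Cond_f3 f μ) {k : ℝ} (hk : 0 < k)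
    {γ : ℝ → R2 → ℝ} (hγ : InGamma f k γ) :
    0 ≤ sSup ((fun t => Phik f k (γ t)) '' Icc (0:ℝ) 1) := by
  have h0 : Phik f k (γ 0) = 0 := by
    have : γ 0 = fun _ => 0 := funext hγ.2.2.1
    rw [this]
    simp [Phik, gradient, Primitive_zero]
  exact le_csSup (bddAbove_path hf3 hk hγ) ⟨0, by simp, h0⟩

/-- A map of paths `Γ_{k₁} → Γ_{k₂}` multiplying the energy by at most `C` gives
`m_{k₂} ≤ C m_{k₁}`. The hypothesis `hne` covers the convention `sInf ∅ = 0`. -/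
lemma mpLevel_le {f : ℝ → ℝ} {μ : ℝ} (hf3 : Cond_f3 f μ) {k₁ k₂ C : ℝ} (hk₁ : 0 < k₁)
    (hk₂ : 0 < k₂) (hC : 0 < C) (T : (R2 → ℝ) → R2 → ℝ)
    (hT : ∀ γ, InGamma f k₁ γ → InGamma f k₂ (fun t => T (γ t)) ∧
      ∀ t ∈ Icc (0:ℝ) 1, Phik f k₂ (T (γ t)) ≤ C * Phik f k₁ (γ t))
    (hne : (∃ γ, InGamma f k₂ γ) → ∃ γ, InGamma f k₁ γ) :
    mpLevel f k₂ ≤ C * mpLevel f k₁ := by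
  by_cases h : ∃ γ, InGamma f k₁ γ
  · obtain ⟨γ₀, hγ₀⟩ := h
    rw [← div_le_iff₀' hC]
    refine le_csInf (Set.nonempty_of_mem ⟨γ₀, hγ₀, rfl⟩) ?_
    rintro _ ⟨γ, hγ, rfl⟩
    rw [div_le_iff₀' hC]
    obtain ⟨h1, h2⟩ := hT γ hγ
    have hbdd : BddBelow {c : ℝ | ∃ γ : ℝ → R2 → ℝ, InGamma f k₂ γ ∧
        c = sSup ((fun t => Phik f k₂ (γ t)) '' Icc (0:ℝ) 1)} := by
      refine ⟨0, ?_⟩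
      rintro _ ⟨γ', hγ', rfl⟩
      exact sup_nonneg hf3 hk₂ hγ'
    apply (csInf_le hbdd ⟨_, h1, rfl⟩).trans
    apply csSup_le (Set.Nonempty.image _ ⟨0, by simp⟩)
    rintro _ ⟨t, ht, rfl⟩
    refine (h2 t ht).trans ?_
    gcongr
    exact le_csSup (bddAbove_path hf3 hk₁ hγ) ⟨t, ht, rfl⟩
  · have h' : ¬ ∃ γ, InGamma f k₂ γ := fun h2 => h (hne h2)
    have e : ∀ k, (¬ ∃ γ, InGamma f k γ) → mpLevel f k = 0 := by
      intro k hk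
      rw [mpLevel]
      convert Real.sInf_empty
      rw [Set.eq_empty_iff_forall_notMem]
      rintro c ⟨γ, hγ, -⟩
      exact hk ⟨γ, hγ⟩
    rw [e _ h, e _ h', mul_zero]

lemma Phik_mono (f : ℝ → ℝ) {k₁ k₂ : ℝ} (h : k₁ ≤ k₂) {u : R2 → ℝ} (hu : MemH1 u) :
    Phik f k₁ u ≤ Phik f k₂ u := by
  rw [Phik_eq f k₁ hu, Phik_eq f k₂ hu]
  have : 0 ≤ ∫ x, u x ^ 2 := integral_nonneg fun x => sq_nonneg _
  gcongr

lemma InGamma.anti {f : ℝ → ℝ} {k₁ k₂ : ℝ} (h : k₁ ≤ k₂) {γ : ℝ → R2 → ℝ}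
    (hγ : InGamma f k₂ γ) : InGamma f k₁ γ :=
  ⟨hγ.1, hγ.2.1, hγ.2.2.1, (Phik_mono f h (hγ.1 1 (by simp)).1).trans_lt hγ.2.2.2⟩

lemma InGamma.dil {f : ℝ → ℝ} {μ : ℝ} (hμ : 2 < μ) (hfc : Continuous f) (hf3 : Cond_f3 f μ)
    {k₁ k₂ a θ : ℝ} (hk₁ : 0 < k₁) (hk₂ : 0 < k₂) (ha : 1 ≤ a) (hθ : 1 ≤ θ)
    (hθk : θ ^ 2 = k₂ / k₁) (hak : a ^ μ = a ^ 2 * θ ^ 2) {γ : ℝ → R2 → ℝ}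
    (hγ : InGamma f k₁ γ) : InGamma f k₂ (fun t => dil a θ (γ t)) := by
  have hθ0 : 0 < θ := one_pos.trans_le hθ
  have ha0 : 0 < a := one_pos.trans_le ha
  obtain ⟨h1, h2, h3, h4⟩ := hγ
  refine ⟨fun t ht => ⟨(h1 t ht).1.dil hθ0, (h1 t ht).2.dil⟩, ?_, ?_, ?_⟩
  · intro t₀ ht₀ δ hδ
    obtain ⟨η, hη, h⟩ := h2 t₀ ht₀ (δ / a) (by positivity)
    refine ⟨η, hη, fun t ht htt => ?_⟩
    have e : (fun x => _root_.dil a θ (γ t) x - _root_.dil a θ (γ t₀) x) =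
        _root_.dil a θ (fun x => γ t x - γ t₀ x) := by
      ext x; simp only [_root_.dil]; ring
    rw [e]
    apply (H1norm_dil_le ha0.le hθ ((h1 t ht).1.sub (h1 t₀ ht₀).1)).trans_lt
    have := h t ht htt
    rwa [lt_div_iff₀' ha0] at this
  · intro x
    simp [_root_.dil, h3]
  · have hm := h1 1 (by simp)
    apply (Phik_scale_le hμ hfc hf3 hk₁ hk₂ ha hθ0 hθk hak hm.1 hm.2).trans_lt
    exact mul_neg_of_pos_of_neg (by positivity) h4

lemma mpLevel_mono {f : ℝ → ℝ} {μ : ℝ} (hμ : 2 < μ) (hfc : Continuous f) (hf3 : Cond_f3 f μ)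
    {k₁ k₂ : ℝ} (hk₁ : 0 < k₁) (h : k₁ ≤ k₂) :
    mpLevel f k₁ ≤ mpLevel f k₂ ∧
      mpLevel f k₂ ≤ (k₂ / k₁) ^ (2 / (μ - 2)) * mpLevel f k₁ := by
  have hk₂ : 0 < k₂ := hk₁.trans_le h
  have hq : 1 ≤ k₂ / k₁ := (one_le_div hk₁).2 h
  have hq0 : 0 < k₂ / k₁ := one_pos.trans_le hq
  have hμ2 : 0 < μ - 2 := by linarith
  set θ := √(k₂ / k₁) with hθ
  set a := (k₂ / k₁) ^ (1 / (μ - 2)) with ha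
  have hθ1 : 1 ≤ θ := Real.one_le_sqrt.2 hq
  have ha1 : 1 ≤ a := Real.one_le_rpow hq (by positivity)
  have hθk : θ ^ 2 = k₂ / k₁ := Real.sq_sqrt hq0.le
  have ha2 : a ^ 2 = (k₂ / k₁) ^ (2 / (μ - 2)) := by
    rw [ha, ← Real.rpow_natCast, ← Real.rpow_mul hq0.le]
    congr 1
    push_cast
    ring
  have hak : a ^ μ = a ^ 2 * θ ^ 2 := by
    rw [ha2, hθk, ha, ← Real.rpow_mul hq0.le, ← Real.rpow_add_one hq0.ne']
    congr 1
    field_simp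
    ring
  have hdil := fun γ (hγ : InGamma f k₁ γ) => hγ.dil hμ hfc hf3 hk₁ hk₂ ha1 hθ1 hθk hak
  constructor
  · have := mpLevel_le hf3 (C := 1) hk₂ hk₁ one_pos id
      (fun γ hγ => ⟨hγ.anti h, fun t ht => by
        simpa using Phik_mono f h (hγ.1 t ht).1⟩)
      (fun ⟨γ, hγ⟩ => ⟨_, hdil γ hγ⟩)
    simpa using this
  · rw [← ha2]
    exact mpLevel_le hf3 hk₁ hk₂ (by positivity) (dil a θ)
      (fun γ hγ => ⟨hdil γ hγ, fun t ht =>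
        Phik_scale_le hμ hfc hf3 hk₁ hk₂ ha1 (one_pos.trans_le hθ1) hθk hak
          (hγ.1 t ht).1 (hγ.1 t ht).2⟩)
      (fun ⟨γ, hγ⟩ => ⟨γ, hγ.anti h⟩)

/-- Lemma 4.2: continuity of the mountain-pass level. -/
theorem statement8 (f : ℝ → ℝ) (hfc : Continuous f) (μ p lp : ℝ)
    (hμ : 2 < μ) (hp : 2 < p) (hlp0 : 0 < lp)
    (hf1 : Cond_f1 f) (hf2 : Cond_f2 f) (hf3 : Cond_f3 f μ) (hf4 : Cond_f4 f p lp)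
    (Cp : ℝ) (hCp : IsBestSobolev p Cp)
    (hlp : ((p - 2) / p * (2 * μ / (μ - 2))) ^ ((p - 2) / 2) * Cp ^ (p / 2) < lp) :
    ∀ (kj : ℕ → ℝ) (k : ℝ), 0 < k → (∀ j, 0 < kj j) → Tendsto kj atTop (𝓝 k) →
      Tendsto (fun j => mpLevel f (kj j)) atTop (𝓝 (mpLevel f k)) := by
  intro kj k hk hkj hlim
  have hc : 0 < 2 / (μ - 2) := div_pos two_pos (by linarith)
  set c := 2 / (μ - 2) with hcdef
  have hpow : Tendsto (fun j => (kj j / k) ^ c * mpLevel f k) atTop (𝓝 (mpLevel f k)) := by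
    have h1 : Tendsto (fun j => kj j / k) atTop (𝓝 1) := by
      simpa [hk.ne'] using hlim.div_const k
    simpa using (h1.rpow_const (p := c) (Or.inl one_ne_zero)).mul_const (mpLevel f k)
  have hlo := hpow.min (tendsto_const_nhds (x := mpLevel f k))
  have hhi := hpow.max (tendsto_const_nhds (x := mpLevel f k))
  rw [min_self] at hlo
  rw [max_self] at hhi
  refine tendsto_of_tendsto_of_tendsto_of_le_of_le hlo hhi (fun j => ?_) (fun j => ?_)
  · rcases le_total (kj j) k with h | h
    · apply (min_le_left _ _).trans
      have h2 := (mpLevel_mono hμ hfc hf3 (hkj j) h).2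
      rw [← inv_div k, Real.inv_rpow (div_pos hk (hkj j)).le]
      rwa [inv_mul_le_iff₀ (Real.rpow_pos_of_pos (div_pos hk (hkj j)) _)]
    · exact (min_le_right _ _).trans (mpLevel_mono hμ hfc hf3 hk h).1
  · rcases le_total (kj j) k with h | h
    · exact (mpLevel_mono hμ hfc hf3 (hkj j) h).1.trans (le_max_right _ _)
    · exact (mpLevel_mono hμ hfc hf3 hk h).2.trans (le_max_left _ _)
end
end

section
/- (Lemma 6.7: Lions-type vanishing lemma for critical exponential growth) Assume f satisfies (f1)–(f3). Let (u_n) ⊂ H¹(ℝ²) be a sequence of nonnegative functions with sup_n ‖u_n‖_{H¹} < ∞ and limsup_{n→∞} ‖∇u_n‖²_{L²(ℝ²)} < 1. If there exists R > 0 such that lim_{n→∞} sup_{z∈ℝ²} ∫_{B(z,R)} u_n² dx = 0, then lim_{n→∞} ∫_{ℝ²} F(u_n) dx = 0 and lim_{n→∞} ∫_{ℝ²} f(u_n)u_n dx = 0, where F(t) = ∫₀ᵗ f(τ)dτ. -/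
/-!
The argument rests on a potential estimate with the sharp constant. Averaging the fundamental
theorem of calculus along segments over a disc of radius `D` gives
`|u x| ≤ mean of |u| over B(x, D) + (1 / 2π) ∫_{|z| < D} |∇u(x + z)| / |z| dz`
(`mean_add_potential`). Cauchy–Schwarz with the weight `1 + t |z|^{-β}` bounds the square of the
second term by `(‖∇u‖² + t H(x)) log (1 + D^β / t) / (2πβ)` for every `t > 0`
(`pointwise_log_bound`), where `H(x) = ∫_{|z| < D} |∇u(x + z)|² |z|^{-β} dz` has integral at most
a multiple of `D^{2-β} ‖∇u‖²` by Tonelli, for `β < 2`.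

This is used twice. With `t` a large multiple of `D` and `β = 1`, Chebyshev's inequality shows that
the superlevel set `{u ≥ s}` has measure `O(D²)` once the means over discs of radius `D` are below
`s / 2`. Vanishing makes these means eventually small for each fixed `D`, so the measure of
`{u_n ≥ s}` tends to `0` (`volume_superlevel_le`). With `t` of order `1 / (1 + H(x))` and `β` close
to `2`, the condition `‖∇u‖² < 1` leaves room for some `α > 4π` with `exp (α u²)` at most a constant
times `(1 + H)^θ`, `θ < 1`, hence at most `κ H + C_κ` for every `κ > 0` (`exp_sq_le_gradPot`). This
is a subcritical Trudinger–Moser inequality, obtained without rearrangement.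

By the growth conditions `f(s) s ≤ ε s²` for `s < s₀` and `f(s) s ≤ C exp (α s²)` for `s ≥ s₀`, so
`∫ f(u_n) u_n ≤ ε ‖u_n‖² + C κ ∫ H + C C_κ |{u_n ≥ s₀}|`, and `ε`, `κ`, `n` are chosen in this
order. The statement for `F` follows from `0 ≤ F(t) ≤ f(t) t`.
-/

open MeasureTheory Real Filter Set Metric
open scoped RealInnerProductSpace Topology ENNReal

noncomputable section

/-! ### The sharp potential estimate -/

/-- Fundamental theorem of calculus along a segment, in `ℝ≥0∞`: no integrability of the derivative
is needed, since the right-hand side is infinite otherwise. -/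
lemma enorm_sub_le_segment {u : R2 → ℝ} (hu : Differentiable ℝ u) (x y : R2) :
    ‖u (x + y) - u x‖ₑ ≤ ∫⁻ t in Ioo (0:ℝ) 1, ‖fderiv ℝ u (x + t • y)‖ₑ * ‖y‖ₑ := by
  by_cases hfin : (∫⁻ t in Ioo (0:ℝ) 1, ‖fderiv ℝ u (x + t • y)‖ₑ * ‖y‖ₑ) = ⊤
  · rw [hfin]; exact le_top
  have hd : ∀ t : ℝ, HasDerivAt (fun t : ℝ => u (x + t • y)) (fderiv ℝ u (x + t • y) y) t := by
    intro t
    have h1 : HasDerivAt (fun t : ℝ => x + t • y) y t := by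
      simpa using ((hasDerivAt_id t).smul_const y).const_add x
    exact (hu (x + t • y)).hasFDerivAt.comp_hasDerivAt t h1
  have hmeas : Measurable (fun t : ℝ => fderiv ℝ u (x + t • y) y) := by
    have : (fun t : ℝ => fderiv ℝ u (x + t • y) y) = deriv (fun t : ℝ => u (x + t • y)) := by
      funext t; exact (hd t).deriv.symm
    rw [this]; exact measurable_deriv _
  have hle : ∀ t : ℝ, ‖fderiv ℝ u (x + t • y) y‖ₑ ≤ ‖fderiv ℝ u (x + t • y)‖ₑ * ‖y‖ₑ :=
    fun t => ContinuousLinearMap.le_opENorm _ _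
  have hint : IntegrableOn (fun t : ℝ => fderiv ℝ u (x + t • y) y) (Ioo 0 1) := by
    refine ⟨hmeas.aestronglyMeasurable, ?_⟩
    exact (lintegral_mono hle).trans_lt (lt_top_iff_ne_top.2 hfin)
  have hii : IntervalIntegrable (fun t : ℝ => fderiv ℝ u (x + t • y) y) volume 0 1 := by
    rw [intervalIntegrable_iff_integrableOn_Ioo_of_le zero_le_one]; exact hint
  have := intervalIntegral.integral_eq_sub_of_hasDerivAt (fun t _ => hd t) hii
  simp only [one_smul, zero_smul, add_zero] at this
  rw [← this, intervalIntegral.integral_of_le zero_le_one, integral_Ioc_eq_integral_Ioo]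
  exact (enorm_integral_le_lintegral_enorm _).trans (lintegral_mono hle)

/-- Polar coordinates for a nonnegative radial function on the plane. -/
lemma lintegral_radial {F : ℝ → ℝ} (hF : ∀ r, 0 ≤ F r)
    (hi : IntegrableOn (fun r => r * F r) (Ioi 0)) :
    ∫⁻ z : R2, ENNReal.ofReal (F ‖z‖) = ENNReal.ofReal (2 * π * ∫ r in Ioi (0:ℝ), r * F r) := by
  have h1 : Integrable (fun z : R2 => F ‖z‖) := by
    rw [integrable_fun_norm_addHaar]
    simpa using hi
  rw [← ofReal_integral_eq_lintegral_ofReal h1 (Eventually.of_forall fun z => hF _),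
    integral_fun_norm_addHaar]
  congr 1
  have : (volume : Measure R2).real (ball 0 1) = π := by
    rw [Measure.real, EuclideanSpace.volume_ball_fin_two]
    simp [pi_pos.le]
  rw [this]
  simp
  ring

lemma lintegral_comp_smul_R2 {ψ : R2 → ℝ≥0∞} (hψ : Measurable ψ) {t : ℝ} (ht : 0 < t) :
    ∫⁻ y, ψ (t • y) = ENNReal.ofReal ((t ^ 2)⁻¹) * ∫⁻ z, ψ z := by
  have := lintegral_map (μ := (volume : Measure R2)) hψ (measurable_const_smul t)
  rw [← this, Measure.map_addHaar_smul _ ht.ne', lintegral_smul_measure]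
  simp [abs_of_pos ht]

/-- The `t`-integral left after the substitution `z = t y` and Tonelli; it turns the segment
integral into the kernel `|z|⁻¹`. -/
lemma lintegral_cube_tail_le {D r : ℝ} (hD : 0 < D) (hr : 0 ≤ r) :
    ∫⁻ t in Ioo (0:ℝ) 1, (if r < t * D then ENNReal.ofReal ((t ^ 3)⁻¹ * r) else 0) ≤
      if r < D then ENNReal.ofReal (D ^ 2 / 2) * ENNReal.ofReal r⁻¹ else 0 := by
  rcases hr.eq_or_lt with rfl | hr0
  · simp
  by_cases h : r < D
  · have hc : 0 < r / D := by positivity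
    rw [if_pos h]
    calc _ ≤ ∫⁻ t in Ioi (r / D), ENNReal.ofReal (t ^ (-3 : ℝ) * r) := by
          rw [← lintegral_indicator measurableSet_Ioo, ← lintegral_indicator measurableSet_Ioi]
          refine lintegral_mono fun t => ?_
          by_cases h1 : t ∈ Ioo (0:ℝ) 1
          · rw [indicator_of_mem h1]
            by_cases h2 : r < t * D
            · have h3 : t ∈ Ioi (r / D) := by rw [mem_Ioi, div_lt_iff₀ hD]; exact h2
              rw [indicator_of_mem h3, if_pos h2, rpow_neg h1.1.le]
              norm_cast
            · rw [if_neg h2]; exact zero_le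
          · rw [indicator_of_notMem h1]; exact zero_le
      _ = ENNReal.ofReal (∫ t in Ioi (r / D), t ^ (-3 : ℝ) * r) := by
          rw [ofReal_integral_eq_lintegral_ofReal]
          · exact (integrableOn_Ioi_rpow_of_lt (by norm_num) hc).mul_const r
          · filter_upwards [ae_restrict_mem measurableSet_Ioi] with t ht
            have : 0 < t := hc.trans ht
            simp only [Pi.zero_apply]; positivity
      _ ≤ _ := by
          rw [integral_mul_const, integral_Ioi_rpow_of_lt (by norm_num) hc,
            ← ENNReal.ofReal_mul (by positivity)]
          apply le_of_eq; congr 1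
          have : (-3 : ℝ) + 1 = -2 := by norm_num
          rw [this, rpow_neg hc.le, rpow_two]
          field_simp
  · rw [if_neg h]
    refine le_of_eq ?_
    rw [setLIntegral_congr_fun measurableSet_Ioo (g := fun _ => 0)]
    · simp
    · intro t ht
      have : ¬ r < t * D := by
        have := mul_le_of_le_one_left hD.le ht.2.le
        linarith
      simp [this]

/-- Potential estimate: a function is controlled by its mean over a disc and by the Riesz potential
of its gradient. With the normalisation `1 / (2π)` of the potential, the constant is the sharp
one. -/
lemma mean_add_potential {u : R2 → ℝ} (hu : Differentiable ℝ u) {D : ℝ} (hD : 0 < D) (x : R2) :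
    ENNReal.ofReal (π * D ^ 2) * ‖u x‖ₑ ≤ (∫⁻ y in ball (0:R2) D, ‖u (x + y)‖ₑ) +
      ENNReal.ofReal (D ^ 2 / 2) *
        ∫⁻ z in ball (0:R2) D, ‖fderiv ℝ u (x + z)‖ₑ * ENNReal.ofReal ‖z‖⁻¹ := by
  have hG : Measurable (fun z => ‖fderiv ℝ u z‖ₑ) := (measurable_fderiv ℝ u).enorm
  have hvol : volume (ball (0:R2) D) = ENNReal.ofReal (π * D ^ 2) := by
    rw [EuclideanSpace.volume_ball_fin_two, ENNReal.ofReal_mul pi_pos.le, mul_comm,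
      ENNReal.ofReal_pow hD.le]
  have hucont := hu.continuous
  have hm1 : Measurable (fun y => ‖u (x + y)‖ₑ) :=
    (hucont.comp (continuous_const.add continuous_id)).measurable.enorm
  calc ENNReal.ofReal (π * D ^ 2) * ‖u x‖ₑ = ∫⁻ y in ball (0:R2) D, ‖u x‖ₑ := by
        rw [setLIntegral_const, hvol, mul_comm]
    _ ≤ ∫⁻ y in ball (0:R2) D, (‖u (x + y)‖ₑ +
          ∫⁻ t in Ioo (0:ℝ) 1, ‖fderiv ℝ u (x + t • y)‖ₑ * ‖y‖ₑ) := by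
        refine lintegral_mono fun y => ?_
        have h := enorm_sub_le_segment hu x y
        calc ‖u x‖ₑ = ‖u (x + y) - (u (x + y) - u x)‖ₑ := by rw [sub_sub_cancel]
          _ ≤ ‖u (x + y)‖ₑ + ‖u (x + y) - u x‖ₑ := enorm_sub_le
          _ ≤ _ := by gcongr
    _ = (∫⁻ y in ball (0:R2) D, ‖u (x + y)‖ₑ) + ∫⁻ y in ball (0:R2) D,
          ∫⁻ t in Ioo (0:ℝ) 1, ‖fderiv ℝ u (x + t • y)‖ₑ * ‖y‖ₑ := lintegral_add_left hm1 _
    _ ≤ _ := by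
        gcongr
        have hm2 : Measurable (Function.uncurry fun (y : R2) (t : ℝ) =>
            ‖fderiv ℝ u (x + t • y)‖ₑ * ‖y‖ₑ) := by
          refine Measurable.mul (hG.comp ?_) ?_ <;> fun_prop
        rw [lintegral_lintegral_swap hm2.aemeasurable]
        calc _ = ∫⁻ t in Ioo (0:ℝ) 1, ∫⁻ z : R2, ‖fderiv ℝ u (x + z)‖ₑ *
              (if ‖z‖ < t * D then ENNReal.ofReal ((t ^ 3)⁻¹ * ‖z‖) else 0) := by
              refine setLIntegral_congr_fun measurableSet_Ioo fun t ht => ?_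
              have ht0 : 0 < t := ht.1
              have hψ : Measurable (fun z : R2 => ‖fderiv ℝ u (x + z)‖ₑ *
                  (if ‖z‖ < t * D then ENNReal.ofReal (t⁻¹ * ‖z‖) else 0)) := by
                refine Measurable.mul (hG.comp (by fun_prop)) (Measurable.ite ?_ (by fun_prop)
                  (by fun_prop))
                exact measurableSet_lt (by fun_prop) (by fun_prop)
              have key := lintegral_comp_smul_R2 hψ ht0
              rw [← lintegral_indicator measurableSet_ball]
              calc _ = ∫⁻ y : R2, ‖fderiv ℝ u (x + t • y)‖ₑ *
                  (if ‖t • y‖ < t * D then ENNReal.ofReal (t⁻¹ * ‖t • y‖) else 0) := by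
                    refine lintegral_congr fun y => ?_
                    rw [norm_smul, norm_of_nonneg ht0.le]
                    by_cases hy : ‖y‖ < D
                    · have h1 : y ∈ ball (0:R2) D := by simpa using hy
                      have h2 : t * ‖y‖ < t * D := by gcongr
                      rw [indicator_of_mem h1, if_pos h2, inv_mul_cancel_left₀ ht0.ne',
                        ofReal_norm]
                    · have h1 : y ∉ ball (0:R2) D := by simpa using hy
                      have h2 : ¬ t * ‖y‖ < t * D := by
                        simp only [mul_lt_mul_iff_right₀ ht0]; exact hy
                      rw [indicator_of_notMem h1, if_neg h2, mul_zero]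
                _ = _ := by
                    rw [key, ← lintegral_const_mul _ hψ]
                    refine lintegral_congr fun z => ?_
                    split_ifs
                    · rw [mul_left_comm, ← ENNReal.ofReal_mul (by positivity)]
                      congr 2; field_simp
                    · simp
          _ = ∫⁻ z : R2, ∫⁻ t in Ioo (0:ℝ) 1, ‖fderiv ℝ u (x + z)‖ₑ *
              (if ‖z‖ < t * D then ENNReal.ofReal ((t ^ 3)⁻¹ * ‖z‖) else 0) := by
              refine lintegral_lintegral_swap (Measurable.aemeasurable ?_)
              refine Measurable.mul (hG.comp (by fun_prop)) (Measurable.ite ?_ (by fun_prop)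
                  (by fun_prop))
              exact measurableSet_lt (by fun_prop) (by fun_prop)
          _ ≤ ∫⁻ z : R2, ‖fderiv ℝ u (x + z)‖ₑ *
              (if ‖z‖ < D then ENNReal.ofReal (D ^ 2 / 2) * ENNReal.ofReal ‖z‖⁻¹ else 0) := by
              refine lintegral_mono fun z => ?_
              dsimp only
              rw [lintegral_const_mul]
              · gcongr
                exact lintegral_cube_tail_le hD (norm_nonneg z)
              · exact Measurable.ite (measurableSet_lt (by fun_prop) (by fun_prop)) (by fun_prop)
                  (by fun_prop)
          _ = _ := by
              rw [← lintegral_indicator measurableSet_ball, ← lintegral_const_mul]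
              · refine lintegral_congr fun z => ?_
                by_cases hz : ‖z‖ < D
                · have h1 : z ∈ ball (0:R2) D := by simpa using hz
                  rw [if_pos hz, indicator_of_mem h1]; ring
                · have h1 : z ∉ ball (0:R2) D := by simpa using hz
                  rw [if_neg hz, indicator_of_notMem h1]; simp
              · refine Measurable.indicator ?_ measurableSet_ball
                exact (hG.comp (by fun_prop)).mul (by fun_prop)

/-! ### The truncated potential and the logarithmic pointwise bound -/

/-- The Riesz-type potential `∫_{|z| < D} |∇u(x+z)|² |z|^{-β} dz`, truncated at radius `D`. -/
def gradPot (u : R2 → ℝ) (β D : ℝ) (x : R2) : ℝ≥0∞ :=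
  ∫⁻ z in ball (0:R2) D, ‖fderiv ℝ u (x + z)‖ₑ ^ 2 * ENNReal.ofReal (‖z‖ ^ (-β))

/-- Polar coordinates on a disc, the radial integrand `r * F r` being replaced by a closed form
`K`. -/
lemma lintegral_ball_radial {F K : ℝ → ℝ} {D : ℝ} (hF : ∀ r, 0 ≤ F r)
    (hK : ∀ r ∈ Ioo (0:ℝ) D, r * F r = K r) (hi : IntegrableOn K (Ioo 0 D)) :
    ∫⁻ z in ball (0:R2) D, ENNReal.ofReal (F ‖z‖) =
      ENNReal.ofReal (2 * π * ∫ r in Ioo (0:ℝ) D, K r) := by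
  have hio : Ioo (0:ℝ) D = Ioi 0 ∩ Iio D := by ext; simp
  have hfun : (fun r => r * (Iio D).indicator F r) = (Iio D).indicator (fun r => r * F r) := by
    funext r; by_cases h : r ∈ Iio D
    · simp [indicator_of_mem h]
    · simp [indicator_of_notMem h]
  have hi' : IntegrableOn (fun r => r * F r) (Ioo 0 D) :=
    hi.congr_fun (fun r hr => (hK r hr).symm) measurableSet_Ioo
  have h := lintegral_radial (F := (Iio D).indicator F)
    (fun r => indicator_nonneg (fun r _ => hF r) r) (by
      rw [hfun, IntegrableOn, integrable_indicator_iff measurableSet_Iio, IntegrableOn,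
        Measure.restrict_restrict measurableSet_Iio, inter_comm, ← hio]
      exact hi')
  rw [hfun, setIntegral_indicator measurableSet_Iio, ← hio,
    setIntegral_congr_fun measurableSet_Ioo hK] at h
  rw [← h, ← lintegral_indicator measurableSet_ball]
  refine lintegral_congr fun z => ?_
  by_cases hz : ‖z‖ < D
  · have h1 : z ∈ ball (0:R2) D := by simpa using hz
    rw [indicator_of_mem h1, indicator_of_mem (show ‖z‖ ∈ Iio D from hz)]
  · have h1 : z ∉ ball (0:R2) D := by simpa using hz
    rw [indicator_of_notMem h1, indicator_of_notMem (show ‖z‖ ∉ Iio D from hz)]; simp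

lemma lintegral_ball_rpow {β D : ℝ} (hβ : β < 2) (hD : 0 < D) :
    ∫⁻ z in ball (0:R2) D, ENNReal.ofReal (‖z‖ ^ (-β)) =
      ENNReal.ofReal (2 * π * (D ^ (2 - β) / (2 - β))) := by
  have hii : IntervalIntegrable (fun r : ℝ => r ^ (1 - β)) volume 0 D :=
    intervalIntegral.intervalIntegrable_rpow' (by linarith)
  have hi := (intervalIntegrable_iff_integrableOn_Ioo_of_le hD.le).1 hii
  have h := lintegral_ball_radial (F := fun r => |r ^ (-β)|) (fun r => abs_nonneg _) (fun r hr => by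
    have hr0 : 0 < r := hr.1
    rw [abs_of_nonneg (by positivity), rpow_sub hr0, rpow_neg hr0.le, rpow_one]; rfl) hi
  rw [← integral_Ioc_eq_integral_Ioo, ← intervalIntegral.integral_of_le hD.le,
    integral_rpow (Or.inl (by linarith)), zero_rpow (by linarith), sub_zero] at h
  have h2 : 1 - β + 1 = 2 - β := by ring
  rw [h2] at h
  rw [← h]
  refine lintegral_congr fun z => ?_
  rw [abs_of_nonneg (by positivity)]

lemma lintegral_gradPot {u : R2 → ℝ} {β D : ℝ} (hβ : β < 2) (hD : 0 < D) :
    ∫⁻ x, gradPot u β D x =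
      ENNReal.ofReal (2 * π * (D ^ (2 - β) / (2 - β))) * ∫⁻ x, ‖fderiv ℝ u x‖ₑ ^ 2 := by
  have hG : Measurable (fun z => ‖fderiv ℝ u z‖ₑ) := (measurable_fderiv ℝ u).enorm
  have hmp : Measurable (fun z : R2 => ‖z‖ ^ (-β)) := by fun_prop
  unfold gradPot
  rw [lintegral_lintegral_swap]
  · have : ∀ z : R2, ∫⁻ x, ‖fderiv ℝ u (x + z)‖ₑ ^ 2 * ENNReal.ofReal (‖z‖ ^ (-β)) =
        (∫⁻ x, ‖fderiv ℝ u x‖ₑ ^ 2) * ENNReal.ofReal (‖z‖ ^ (-β)) := by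
      intro z
      rw [lintegral_mul_const _ (by exact (hG.comp (by fun_prop)).pow_const 2),
        lintegral_add_right_eq_self (fun x => ‖fderiv ℝ u x‖ₑ ^ 2)]
    simp_rw [this]
    rw [lintegral_const_mul _ hmp.ennreal_ofReal, lintegral_ball_rpow hβ hD, mul_comm]
  · refine Measurable.aemeasurable ?_
    exact ((hG.comp (by fun_prop)).pow_const 2).mul (hmp.comp measurable_snd).ennreal_ofReal

lemma measurable_gradPot (u : R2 → ℝ) (β D : ℝ) : Measurable (gradPot u β D) := by
  have hG : Measurable (fun z => ‖fderiv ℝ u z‖ₑ) := (measurable_fderiv ℝ u).enorm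
  have hmp : Measurable (fun z : R2 => ‖z‖ ^ (-β)) := by fun_prop
  refine Measurable.lintegral_prod_right' (f := fun p : R2 × R2 =>
    ‖fderiv ℝ u (p.1 + p.2)‖ₑ ^ 2 * ENNReal.ofReal (‖p.2‖ ^ (-β))) ?_
  exact ((hG.comp (by fun_prop)).pow_const 2).mul (hmp.comp measurable_snd).ennreal_ofReal

/-- The integral of `r^{β-1} / (r^β + t)` is logarithmic with constant `1 / β`. -/
lemma integral_log_kernel {β t D : ℝ} (hβ : 1 ≤ β) (ht : 0 < t) (hD : 0 < D) :
    IntegrableOn (fun r : ℝ => r ^ (β - 1) / (r ^ β + t)) (Ioo 0 D) ∧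
    ∫ r in Ioo (0:ℝ) D, r ^ (β - 1) / (r ^ β + t) = Real.log (1 + D ^ β / t) / β := by
  have hβ0 : 0 < β := by linarith
  have hpos : ∀ r : ℝ, 0 ≤ r → 0 < r ^ β + t := fun r hr => by positivity
  have hcont : ContinuousOn (fun r : ℝ => r ^ (β - 1) / (r ^ β + t)) (uIcc 0 D) := by
    rw [uIcc_of_le hD.le]
    refine ContinuousOn.div ?_ ?_ fun r hr => (hpos r hr.1).ne'
    · exact (continuous_id.rpow_const fun _ => Or.inr (by linarith)).continuousOn
    · exact ((continuous_id.rpow_const fun _ => Or.inr hβ0.le).add continuous_const).continuousOn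
  have hii := hcont.intervalIntegrable (μ := volume)
  refine ⟨(intervalIntegrable_iff_integrableOn_Ioo_of_le hD.le).1 hii, ?_⟩
  have hd : ∀ r ∈ uIcc 0 D, HasDerivAt (fun r : ℝ => Real.log (r ^ β + t) / β)
      (r ^ (β - 1) / (r ^ β + t)) r := by
    intro r hr
    rw [uIcc_of_le hD.le] at hr
    have h1 := ((((hasDerivAt_id r).rpow_const (p := β) (Or.inr hβ)).add_const t).log
      (hpos r hr.1).ne').div_const β
    refine h1.congr_deriv ?_
    simp only [id, one_mul]; field_simp
  have := intervalIntegral.integral_eq_sub_of_hasDerivAt hd hii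
  rw [← integral_Ioc_eq_integral_Ioo, ← intervalIntegral.integral_of_le hD.le, this,
    zero_rpow hβ0.ne', zero_add, ← sub_div, ← Real.log_div (by positivity) ht.ne']
  congr 2; field_simp; ring

/-- Weighted Cauchy–Schwarz with weight `1 + t |z|^{-β}`. The free parameter `t` interpolates
between the energy term and the potential term. -/
lemma potential_sq_le {u : R2 → ℝ} {β t D : ℝ} (hβ : 1 ≤ β) (ht : 0 < t) (hD : 0 < D) (x : R2) :
    (∫⁻ z in ball (0:R2) D, ‖fderiv ℝ u (x + z)‖ₑ * ENNReal.ofReal ‖z‖⁻¹) ^ 2 ≤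
      ((∫⁻ x, ‖fderiv ℝ u x‖ₑ ^ 2) + ENNReal.ofReal t * gradPot u β D x) *
        ENNReal.ofReal (2 * π * (Real.log (1 + D ^ β / t) / β)) := by
  have hG : Measurable (fun z => ‖fderiv ℝ u z‖ₑ) := (measurable_fderiv ℝ u).enorm
  have hGx : Measurable (fun z => ‖fderiv ℝ u (x + z)‖ₑ) := hG.comp (by fun_prop)
  have hmp : Measurable (fun z : R2 => ‖z‖ ^ (-β)) := by fun_prop
  set w : R2 → ℝ := fun z => 1 + t * ‖z‖ ^ (-β) with hw
  have hw1 : ∀ z, 0 < w z := fun z => by simp only [hw]; positivity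
  have hwm : Measurable w := by simp only [hw]; fun_prop
  have ha : Measurable (fun z => ‖fderiv ℝ u (x + z)‖ₑ * ENNReal.ofReal √(w z)) :=
    hGx.mul hwm.sqrt.ennreal_ofReal
  have hb : Measurable (fun z => ENNReal.ofReal (‖z‖⁻¹ / √(w z))) :=
    (Measurable.div (by fun_prop) hwm.sqrt).ennreal_ofReal
  have hCS := ENNReal.lintegral_mul_le_Lp_mul_Lq (volume.restrict (ball (0:R2) D))
    Real.HolderConjugate.two_two ha.aemeasurable hb.aemeasurable
  have hprod : ∀ z, ((fun z => ‖fderiv ℝ u (x + z)‖ₑ * ENNReal.ofReal √(w z)) *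
      (fun z => ENNReal.ofReal (‖z‖⁻¹ / √(w z)))) z =
      ‖fderiv ℝ u (x + z)‖ₑ * ENNReal.ofReal ‖z‖⁻¹ := by
    intro z
    have : 0 < √(w z) := Real.sqrt_pos.2 (hw1 z)
    simp only [Pi.mul_apply]
    rw [mul_assoc, ← ENNReal.ofReal_mul this.le, mul_div_cancel₀ _ this.ne']
  simp_rw [hprod] at hCS
  have hA : ∫⁻ z in ball (0:R2) D, (‖fderiv ℝ u (x + z)‖ₑ * ENNReal.ofReal √(w z)) ^ (2:ℝ) ≤
      (∫⁻ x, ‖fderiv ℝ u x‖ₑ ^ 2) + ENNReal.ofReal t * gradPot u β D x := by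
    have h1 : ∀ z, (‖fderiv ℝ u (x + z)‖ₑ * ENNReal.ofReal √(w z)) ^ (2:ℝ) =
        ‖fderiv ℝ u (x + z)‖ₑ ^ 2 + ENNReal.ofReal t *
          (‖fderiv ℝ u (x + z)‖ₑ ^ 2 * ENNReal.ofReal (‖z‖ ^ (-β))) := by
      intro z
      rw [ENNReal.rpow_two, mul_pow, ← ENNReal.ofReal_pow (Real.sqrt_nonneg _),
        Real.sq_sqrt (hw1 z).le, hw, ENNReal.ofReal_add zero_le_one (by positivity),
        ENNReal.ofReal_mul ht.le, ENNReal.ofReal_one]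
      ring
    simp_rw [h1]
    have hm2 : Measurable (fun z : R2 => ‖fderiv ℝ u (x + z)‖ₑ ^ 2 * ENNReal.ofReal (‖z‖ ^ (-β))) :=
      (hGx.pow_const 2).mul hmp.ennreal_ofReal
    rw [lintegral_add_left (hGx.pow_const 2), lintegral_const_mul _ hm2]
    refine add_le_add ?_ le_rfl
    calc _ ≤ ∫⁻ z, ‖fderiv ℝ u (x + z)‖ₑ ^ 2 := setLIntegral_le_lintegral _ _
      _ = _ := lintegral_add_left_eq_self (fun z => ‖fderiv ℝ u z‖ₑ ^ 2) x
  have hB : ∫⁻ z in ball (0:R2) D, (ENNReal.ofReal (‖z‖⁻¹ / √(w z))) ^ (2:ℝ) =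
      ENNReal.ofReal (2 * π * (Real.log (1 + D ^ β / t) / β)) := by
    obtain ⟨hi, he⟩ := integral_log_kernel hβ ht hD
    have h1 : ∀ z : R2, (ENNReal.ofReal (‖z‖⁻¹ / √(w z))) ^ (2:ℝ) =
        ENNReal.ofReal ((fun r : ℝ => |(r ^ 2)⁻¹ / (1 + t * r ^ (-β))|) ‖z‖) := by
      intro z
      rw [ENNReal.rpow_two, ← ENNReal.ofReal_pow (by positivity), div_pow,
        Real.sq_sqrt (hw1 z).le, inv_pow]
      exact congrArg _ (abs_of_nonneg (div_nonneg (by positivity) (hw1 z).le)).symm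
    rw [lintegral_congr h1, lintegral_ball_radial
      (F := fun r => |(r ^ 2)⁻¹ / (1 + t * r ^ (-β))|) (fun r => abs_nonneg _) ?_ hi, he]
    intro r hr
    have hr0 : 0 < r := hr.1
    rw [abs_of_nonneg (by positivity), rpow_neg hr0.le, rpow_sub_one hr0.ne']
    have : 0 < r ^ β := by positivity
    field_simp
  rw [hB] at hCS
  calc _ ≤ _ := pow_le_pow_left₀ zero_le hCS 2
    _ = (∫⁻ z in ball (0:R2) D, (‖fderiv ℝ u (x + z)‖ₑ * ENNReal.ofReal √(w z)) ^ (2:ℝ)) *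
        ENNReal.ofReal (2 * π * (Real.log (1 + D ^ β / t) / β)) := by
      rw [mul_pow, ← ENNReal.rpow_two, ← ENNReal.rpow_two, ← ENNReal.rpow_mul,
        ← ENNReal.rpow_mul]
      norm_num
    _ ≤ _ := by gcongr

/-- Pointwise logarithmic bound: at a point `x` where the potential `gradPot` is finite, `|u x|` is
at most its mean over the disc of radius `D`, up to a term `v` whose square grows only
logarithmically in the potential once `t` is chosen as a small multiple of its inverse. -/
lemma pointwise_log_bound {u : R2 → ℝ} (hu : Differentiable ℝ u) {β t D m c : ℝ} (hβ : 1 ≤ β)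
    (ht : 0 < t) (hD : 0 < D) (hm : 0 ≤ m) (hc : 0 ≤ c) (x : R2)
    (hgr : ∫⁻ x, ‖fderiv ℝ u x‖ₑ ^ 2 ≤ ENNReal.ofReal m)
    (hmean : ∫⁻ y in ball (0:R2) D, ‖u (x + y)‖ₑ ≤ ENNReal.ofReal (π * D ^ 2 * c))
    (hfin : gradPot u β D x ≠ ⊤) :
    ∃ v : ℝ, 0 ≤ v ∧ |u x| ≤ c + v ∧ v ^ 2 ≤
      (m + t * (gradPot u β D x).toReal) * Real.log (1 + D ^ β / t) / (2 * π * β) := by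
  have hlog : 0 ≤ Real.log (1 + D ^ β / t) := by
    apply Real.log_nonneg
    have : 0 ≤ D ^ β / t := by positivity
    linarith
  set h := (gradPot u β D x).toReal with hh
  have hh0 : 0 ≤ h := ENNReal.toReal_nonneg
  have hHe : gradPot u β D x = ENNReal.ofReal h := (ENNReal.ofReal_toReal hfin).symm
  have h1 := mean_add_potential hu hD x
  have h2 := potential_sq_le (u := u) hβ ht hD x
  set P := ∫⁻ z in ball (0:R2) D, ‖fderiv ℝ u (x + z)‖ₑ * ENNReal.ofReal ‖z‖⁻¹ with hP
  have h3 : P ^ 2 ≤ ENNReal.ofReal ((m + t * h) * (2 * π * (Real.log (1 + D ^ β / t) / β))) := by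
    refine h2.trans ?_
    rw [ENNReal.ofReal_mul (p := m + t * h) (by positivity), ENNReal.ofReal_add hm (by positivity),
      ENNReal.ofReal_mul ht.le, hHe]
    gcongr
  have hPfin : P ≠ ⊤ := by
    intro hcon
    rw [hcon] at h3
    simp at h3
  obtain ⟨p, hp0, hpe⟩ : ∃ p : ℝ, 0 ≤ p ∧ P = ENNReal.ofReal p :=
    ⟨P.toReal, ENNReal.toReal_nonneg, (ENNReal.ofReal_toReal hPfin).symm⟩
  rw [hpe, ← ENNReal.ofReal_pow hp0, ENNReal.ofReal_le_ofReal_iff (by positivity)] at h3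
  have h4 : ENNReal.ofReal (π * D ^ 2) * ‖u x‖ₑ ≤
      ENNReal.ofReal (π * D ^ 2 * c) + ENNReal.ofReal (D ^ 2 / 2) * ENNReal.ofReal p := by
    rw [← hpe]; exact h1.trans (by gcongr)
  rw [← ofReal_norm, ← ENNReal.ofReal_mul (by positivity), ← ENNReal.ofReal_mul (by positivity),
    ← ENNReal.ofReal_add (by positivity) (by positivity),
    ENNReal.ofReal_le_ofReal_iff (by positivity), Real.norm_eq_abs] at h4
  have hβ0 : 0 < β := by linarith
  refine ⟨p / (2 * π), by positivity, ?_, ?_⟩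
  · have : π * D ^ 2 * |u x| ≤ π * D ^ 2 * (c + p / (2 * π)) := by
      refine h4.trans (le_of_eq ?_); field_simp
    exact le_of_mul_le_mul_left this (by positivity)
  · rw [div_pow, div_le_iff₀ (by positivity)]
    refine h3.trans (le_of_eq ?_); field_simp

/-! ### Superlevel sets, exponential bound and growth of the nonlinearity -/

/-- Smallness of superlevel sets, of order `D ^ 2`, when the means over discs of radius `D` are at
most `s / 2`: there the potential `gradPot u 1 D` is large, and Chebyshev's inequality applies. -/
lemma volume_superlevel_le {u : R2 → ℝ} (hu : Differentiable ℝ u) {D m s : ℝ} (hD : 0 < D)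
    (hm : 0 ≤ m) (hs : 0 < s) (hgr : ∫⁻ x, ‖fderiv ℝ u x‖ₑ ^ 2 ≤ ENNReal.ofReal m)
    (hmean : ∀ x, ∫⁻ y in ball (0:R2) D, ‖u (x + y)‖ₑ ≤ ENNReal.ofReal (π * D ^ 2 * (s / 2))) :
    volume {x | s ≤ |u x|} ≤ ENNReal.ofReal (8 * m / s ^ 2 * D ^ 2) := by
  have hT : 0 < π * s ^ 2 / (4 * D) := by positivity
  have hsub : {x | s ≤ |u x|} ⊆ {x | ENNReal.ofReal (π * s ^ 2 / (4 * D)) ≤ gradPot u 1 D x} := by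
    intro x hx
    rw [mem_ofPred_eq] at hx ⊢
    by_cases hfin : gradPot u 1 D x = ⊤
    · rw [hfin]; exact le_top
    set h := (gradPot u 1 D x).toReal with hh
    -- This `t` makes the energy contribute at most `s ^ 2 / 8` to the bound on `v ^ 2`.
    set L := (4 * m + 1) / (π * s ^ 2) with hL
    have hL0 : 0 < L := by positivity
    obtain ⟨v, hv0, hv1, hv2⟩ := pointwise_log_bound hu le_rfl (t := L * D) (by positivity) hD hm
      (by positivity) x hgr (hmean x) hfin
    have h0 : 0 ≤ h := ENNReal.toReal_nonneg
    have hv : s / 2 ≤ v := by linarith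
    have hlog : Real.log (1 + D ^ (1:ℝ) / (L * D)) ≤ 1 / L := by
      have := Real.log_le_sub_one_of_pos (show 0 < 1 + D ^ (1:ℝ) / (L * D) by positivity)
      rw [rpow_one] at this ⊢
      refine this.trans (le_of_eq ?_); field_simp; ring
    have h1 : v ^ 2 ≤ (m + L * D * h) * (1 / L) / (2 * π * 1) := hv2.trans (by gcongr)
    have h2 : (m + L * D * h) * (1 / L) / (2 * π * 1) = m / L / (2 * π) + D * h / (2 * π) := by
      field_simp
    have h3 : m / L / (2 * π) ≤ s ^ 2 / 8 := by
      rw [hL, div_div_eq_mul_div, div_div, div_le_div_iff₀ (by positivity) (by norm_num)]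
      nlinarith [show 0 < π * s ^ 2 by positivity]
    have h4 : s ^ 2 / 4 ≤ v ^ 2 := by nlinarith
    have h5 : s ^ 2 / 8 ≤ D * h / (2 * π) := by linarith
    have h6 : π * s ^ 2 / (4 * D) ≤ h := by
      rw [div_le_div_iff₀ (by norm_num) (by positivity)] at h5
      rw [div_le_iff₀ (by positivity)]
      nlinarith
    rw [← ENNReal.ofReal_toReal hfin]
    exact ENNReal.ofReal_le_ofReal h6
  calc volume {x | s ≤ |u x|} ≤ _ := measure_mono hsub
    _ ≤ (∫⁻ x, gradPot u 1 D x) / ENNReal.ofReal (π * s ^ 2 / (4 * D)) :=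
      meas_ge_le_lintegral_div (measurable_gradPot u 1 D).aemeasurable
        (by simpa using hT) ENNReal.ofReal_ne_top
    _ ≤ ENNReal.ofReal (2 * π * (D ^ ((2:ℝ) - 1) / (2 - 1))) * ENNReal.ofReal m /
        ENNReal.ofReal (π * s ^ 2 / (4 * D)) := by
      rw [lintegral_gradPot (by norm_num) hD]; gcongr
    _ = _ := by
      rw [← ENNReal.ofReal_mul (by positivity), ← ENNReal.ofReal_div_of_pos hT]
      congr 1
      have : (2:ℝ) - 1 = 1 := by norm_num
      rw [this, rpow_one]
      field_simp; ring

lemma mean_le_of_sq {u : R2 → ℝ} (hu : Differentiable ℝ u) (hi : Integrable fun x => (u x) ^ 2)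
    {D R η : ℝ} (hD : 0 < D) (hDR : D ≤ R) (hη : 0 < η) (x : R2)
    (h : ∫ y in ball x R, (u y) ^ 2 ≤ π * D ^ 2 * η ^ 2) :
    ∫⁻ y in ball (0:R2) D, ‖u (x + y)‖ₑ ≤ ENNReal.ofReal (π * D ^ 2 * η) := by
  have hvol : volume (ball (0:R2) D) = ENNReal.ofReal (π * D ^ 2) := by
    rw [EuclideanSpace.volume_ball_fin_two, ENNReal.ofReal_mul pi_pos.le, mul_comm,
      ENNReal.ofReal_pow hD.le]
  have hball : ∫⁻ y in ball (0:R2) D, ENNReal.ofReal (u (x + y) ^ 2) ≤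
      ENNReal.ofReal (π * D ^ 2 * η ^ 2) := by
    calc _ = ∫⁻ y in ball x D, ENNReal.ofReal (u y ^ 2) := by
          rw [← lintegral_indicator measurableSet_ball, ← lintegral_indicator measurableSet_ball,
            ← lintegral_add_left_eq_self
              ((ball x D).indicator fun y => ENNReal.ofReal (u y ^ 2)) x]
          refine lintegral_congr fun y => ?_
          by_cases hy : ‖y‖ < D
          · rw [indicator_of_mem (by simpa using hy), indicator_of_mem (by simpa using hy)]
          · rw [indicator_of_notMem (by simpa using hy), indicator_of_notMem (by simpa using hy)]
      _ ≤ ∫⁻ y in ball x R, ENNReal.ofReal (u y ^ 2) :=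
          lintegral_mono_set (ball_subset_ball hDR)
      _ = ENNReal.ofReal (∫ y in ball x R, u y ^ 2) :=
          (ofReal_integral_eq_lintegral_ofReal hi.integrableOn
            (Eventually.of_forall fun y => sq_nonneg _)).symm
      _ ≤ _ := ENNReal.ofReal_le_ofReal h
  have hucont := hu.continuous
  have hm1 : Measurable fun y => ENNReal.ofReal (u (x + y) ^ 2) :=
    ((hucont.comp (continuous_const.add continuous_id)).pow 2).measurable.ennreal_ofReal
  calc _ ≤ ∫⁻ y in ball (0:R2) D, (ENNReal.ofReal (η / 2) +
        ENNReal.ofReal (1 / (2 * η)) * ENNReal.ofReal (u (x + y) ^ 2)) := by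
        refine lintegral_mono fun y => ?_
        rw [← ENNReal.ofReal_mul (by positivity), ← ENNReal.ofReal_add (by positivity)
          (by positivity), ← ofReal_norm, Real.norm_eq_abs]
        apply ENNReal.ofReal_le_ofReal
        have h1 : η / 2 + 1 / (2 * η) * u (x + y) ^ 2 = (η ^ 2 + |u (x + y)| ^ 2) / (2 * η) := by
          rw [sq_abs]; field_simp
        rw [h1, le_div_iff₀ (by positivity)]
        nlinarith [sq_nonneg (η - |u (x + y)|)]
    _ = ENNReal.ofReal (η / 2) * ENNReal.ofReal (π * D ^ 2) + ENNReal.ofReal (1 / (2 * η)) *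
          ∫⁻ y in ball (0:R2) D, ENNReal.ofReal (u (x + y) ^ 2) := by
        rw [lintegral_add_left measurable_const, setLIntegral_const, hvol,
          lintegral_const_mul _ hm1]
    _ ≤ ENNReal.ofReal (η / 2) * ENNReal.ofReal (π * D ^ 2) + ENNReal.ofReal (1 / (2 * η)) *
          ENNReal.ofReal (π * D ^ 2 * η ^ 2) := by gcongr
    _ = _ := by
        rw [← ENNReal.ofReal_mul (by positivity), ← ENNReal.ofReal_mul (by positivity),
          ← ENNReal.ofReal_add (by positivity) (by positivity)]
        congr 1; field_simp; ring

/-- A sublinear power is below an arbitrarily small multiple of the identity plus a constant. -/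
lemma rpow_le_linear {q l : ℝ} (hq0 : 0 < q) (hq1 : q < 1) (hl : 0 < l) :
    ∃ C : ℝ, 0 ≤ C ∧ ∀ y : ℝ, 0 ≤ y → y ^ q ≤ l * y + C := by
  -- Beyond `Y`, the factor `y ^ (q - 1)` is at most `l`.
  set Y := l ^ (1 / (q - 1)) with hY
  have hY0 : 0 < Y := by positivity
  have hq : q - 1 ≠ 0 := by linarith
  have hYq : Y ^ (q - 1) = l := by
    rw [hY, ← rpow_mul hl.le, one_div_mul_cancel hq, rpow_one]
  refine ⟨Y ^ q, by positivity, fun y hy => ?_⟩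
  rcases le_total y Y with h | h
  · have := rpow_le_rpow hy h hq0.le
    have : 0 ≤ l * y := by positivity
    linarith
  · have hy0 : 0 < y := hY0.trans_le h
    have h1 : y ^ (q - 1) ≤ l := by
      rw [← hYq]; exact rpow_le_rpow_of_nonpos hY0 h (by linarith)
    have h2 : y ^ q = y ^ (q - 1) * y := by rw [rpow_sub_one hy0.ne']; field_simp
    have h3 : 0 ≤ Y ^ q := by positivity
    rw [h2]; nlinarith

/-- Pointwise Trudinger–Moser bound: if the gradient energy is below `q ^ 4` with `q < 1`, then
`exp (4π/q · u²)` is bounded by an arbitrarily small multiple of the potential plus a constant. -/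
lemma exp_sq_le_gradPot {q m D κ : ℝ} (hq0 : 0 < q) (hq : 1 / 2 ≤ q) (hq1 : q < 1) (hm : 0 ≤ m)
    (hmq : m < q ^ 4) (hD : 0 < D) (hκ : 0 < κ) :
    ∃ C : ℝ, 0 ≤ C ∧ ∀ u : R2 → ℝ, Differentiable ℝ u →
      (∫⁻ x, ‖fderiv ℝ u x‖ₑ ^ 2 ≤ ENNReal.ofReal m) → ∀ x,
      (∫⁻ y in ball (0:R2) D, ‖u (x + y)‖ₑ ≤ ENNReal.ofReal (π * D ^ 2 * 1)) →
      ENNReal.ofReal (Real.exp (4 * π / q * u x ^ 2)) ≤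
        ENNReal.ofReal κ * gradPot u (2 * q) D x + ENNReal.ofReal C := by
  set ε := q ^ 4 - m with hε
  have hε0 : 0 < ε := by linarith
  set A := D ^ (2 * q) / ε with hA
  have hA0 : 0 < A := by positivity
  set E := Real.exp (4 * π / q * (1 / (1 - q))) with hE
  have hE0 : 0 < E := Real.exp_pos _
  obtain ⟨C, hC0, hC⟩ := rpow_le_linear hq0 hq1 (l := κ / (A * E)) (by positivity)
  refine ⟨E * (κ / (A * E) * (1 + A) + C), by positivity, fun u hu hgr x hmean => ?_⟩
  by_cases hfin : gradPot u (2 * q) D x = ⊤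
  · rw [hfin, ENNReal.mul_top (by simpa using hκ), top_add]; exact le_top
  set h := (gradPot u (2 * q) D x).toReal with hh
  have h0 : 0 ≤ h := ENNReal.toReal_nonneg
  -- This `t` keeps `m + t * h` below `q ^ 4` and makes the logarithm grow like `log (1 + h)`.
  obtain ⟨v, hv0, hv1, hv2⟩ := pointwise_log_bound hu (β := 2 * q) (t := ε / (1 + h)) (by linarith)
    (by positivity) hD hm zero_le_one x hgr hmean hfin
  rw [← hh] at hv2
  have hAe : D ^ (2 * q) / (ε / (1 + h)) = A * (1 + h) := by rw [hA]; field_simp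
  rw [hAe] at hv2
  set y := 1 + A * (1 + h) with hy
  have hy1 : 1 ≤ y := by
    have : 0 ≤ A * (1 + h) := by positivity
    linarith
  have hlog : 0 ≤ Real.log y := Real.log_nonneg hy1
  have hth : m + ε / (1 + h) * h ≤ q ^ 4 := by
    have : ε / (1 + h) * h ≤ ε := by
      rw [div_mul_eq_mul_div, div_le_iff₀ (by positivity)]; nlinarith
    linarith
  have hv3 : v ^ 2 ≤ q ^ 4 * Real.log y / (2 * π * (2 * q)) := hv2.trans (by gcongr)
  have hu2 : u x ^ 2 ≤ v ^ 2 / q + 1 / (1 - q) := by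
    have h1q : 0 < 1 - q := by linarith
    have h1 : u x ^ 2 ≤ (1 + v) ^ 2 := by
      rw [← sq_abs]; exact pow_le_pow_left₀ (abs_nonneg _) hv1 2
    have h2 : v ^ 2 / q + 1 / (1 - q) - (1 + v) ^ 2 = ((1 - q) * v - q) ^ 2 / (q * (1 - q)) := by
      field_simp; ring
    have h3 : 0 ≤ ((1 - q) * v - q) ^ 2 / (q * (1 - q)) := by positivity
    linarith
  have hexp : 4 * π / q * u x ^ 2 ≤ q * Real.log y + 4 * π / q * (1 / (1 - q)) := by
    calc 4 * π / q * u x ^ 2 ≤ 4 * π / q * ((q ^ 4 * Real.log y / (2 * π * (2 * q))) / q +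
          1 / (1 - q)) := by
          refine mul_le_mul_of_nonneg_left (hu2.trans ?_) (by positivity)
          gcongr
      _ = _ := by
          rw [mul_add]; congr 1; field_simp; ring
  have hfinal : Real.exp (4 * π / q * u x ^ 2) ≤ κ * h + E * (κ / (A * E) * (1 + A) + C) := by
    calc _ ≤ Real.exp (q * Real.log y + 4 * π / q * (1 / (1 - q))) := Real.exp_le_exp.2 hexp
      _ = y ^ q * E := by
          rw [Real.exp_add, rpow_def_of_pos (by linarith), mul_comm q]
      _ ≤ (κ / (A * E) * y + C) * E := by
          gcongr; exact hC y (by linarith)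
      _ = _ := by rw [hy]; field_simp; ring
  rw [← ENNReal.ofReal_toReal hfin, ← ENNReal.ofReal_mul hκ.le,
    ← ENNReal.ofReal_add (by positivity) (by positivity)]
  exact ENNReal.ofReal_le_ofReal hfinal

/-- Growth of `f s * s`: quadratically small near `0` and of exponential order `α > 4π` elsewhere. -/
lemma growth_bound {f : ℝ → ℝ} (hfc : Continuous f) (hf1 : Cond_f1 f) (hf2 : Cond_f2 f)
    {α : ℝ} (hα : 4 * π < α) {ε : ℝ} (hε : 0 < ε) :
    ∃ s₀ C : ℝ, 0 < s₀ ∧ 0 ≤ C ∧ ∀ s : ℝ, 0 ≤ s →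
      (s < s₀ → f s * s ≤ ε * s ^ 2) ∧ (s₀ ≤ s → f s * s ≤ C * Real.exp (α * s ^ 2)) := by
  have hα0 : 0 < α := by linarith [pi_pos]
  have h1 : ∀ᶠ t in 𝓝[≠] (0:ℝ), f t / t < ε := hf1.eventually (gt_mem_nhds hε)
  rw [eventually_nhdsWithin_iff, Metric.eventually_nhds_iff] at h1
  obtain ⟨s₀, hs₀, h1⟩ := h1
  set d := (α - 4 * π) / 2 with hd
  have hd0 : 0 < d := by rw [hd]; linarith
  have h2 : ∀ᶠ s in atTop, f s / (Real.exp ((4 * π + d) * s ^ 2) - 1) < 1 :=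
    (hf2.1 (4 * π + d) (by linarith)).eventually (gt_mem_nhds one_pos)
  obtain ⟨s₁, h2⟩ := eventually_atTop.1 h2
  obtain ⟨B, hB⟩ := (isCompact_Icc (a := (0:ℝ)) (b := max s₁ 1)).exists_bound_of_continuousOn
    (f := fun s => f s * s) (by fun_prop)
  have hB0 : 0 ≤ |B| := abs_nonneg B
  have hdi : 0 < 1 / d := by positivity
  refine ⟨s₀, |B| + (1 + 1 / d), hs₀, by positivity, fun s hs => ⟨fun h => ?_, fun _ => ?_⟩⟩
  · rcases hs.eq_or_lt with rfl | hs0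
    · simp
    · have := h1 (y := s) (by simpa [abs_of_pos hs0] using h) hs0.ne'
      rw [div_lt_iff₀ hs0] at this
      nlinarith
  · have he1 : 1 ≤ Real.exp (α * s ^ 2) := Real.one_le_exp (by positivity)
    rcases le_total s (max s₁ 1) with h | h
    · have h3 := hB s ⟨hs, h⟩
      have h4 : f s * s ≤ |B| := (le_abs_self _).trans (h3.trans (le_abs_self B))
      nlinarith
    · have hs1 : s₁ ≤ s := (le_max_left _ _).trans h
      have hs2 : 1 ≤ s := (le_max_right _ _).trans h
      have hs0 : 0 < s := by linarith
      have hgt : 1 < Real.exp ((4 * π + d) * s ^ 2) := Real.one_lt_exp_iff.2 (by positivity)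
      have h3 := h2 s hs1
      rw [div_lt_one (by linarith)] at h3
      have h4 : f s ≤ Real.exp ((4 * π + d) * s ^ 2) := by linarith
      have h5 : s ≤ (1 + 1 / d) * Real.exp (d * s ^ 2) := by
        have h6 := Real.add_one_le_exp (d * s ^ 2)
        have h7 : (1 + 1 / d) * (d * s ^ 2 + 1) ≤ (1 + 1 / d) * Real.exp (d * s ^ 2) := by gcongr
        have h8 : (1 + 1 / d) * (d * s ^ 2 + 1) = d * s ^ 2 + 1 + s ^ 2 + 1 / d := by
          field_simp; ring
        nlinarith [show 0 ≤ d * s ^ 2 by positivity]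
      have h9 : Real.exp (α * s ^ 2) =
          Real.exp ((4 * π + d) * s ^ 2) * Real.exp (d * s ^ 2) := by
        rw [← Real.exp_add]; congr 1; rw [hd]; ring
      calc f s * s ≤ Real.exp ((4 * π + d) * s ^ 2) * ((1 + 1 / d) * Real.exp (d * s ^ 2)) := by
            gcongr
        _ = (1 + 1 / d) * Real.exp (α * s ^ 2) := by rw [h9]; ring
        _ ≤ _ := mul_le_mul_of_nonneg_right (by linarith) (Real.exp_pos _).le

lemma tendsto_integral_of_lintegral_small {v : ℕ → R2 → ℝ} (hc : ∀ n, Continuous (v n))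
    (h0 : ∀ n x, 0 ≤ v n x)
    (h : ∀ e : ℝ, 0 < e → ∀ᶠ n in atTop, ∫⁻ x, ENNReal.ofReal (v n x) ≤ ENNReal.ofReal e) :
    Tendsto (fun n => ∫ x, v n x) atTop (𝓝 0) := by
  rw [Metric.tendsto_nhds]
  intro e he
  filter_upwards [h (e / 2) (by positivity)] with n hn
  rw [dist_zero_right, norm_of_nonneg (integral_nonneg (h0 n)),
    integral_eq_lintegral_of_nonneg_ae (Eventually.of_forall (h0 n))
      (hc n).aestronglyMeasurable]
  have := ENNReal.toReal_le_of_le_ofReal (by positivity) hn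
  linarith

/-! ### Vanishing -/

/-- The vanishing statement in `ℝ≥0∞`: the integrals of `f (u n) * u n` become arbitrarily small. -/
lemma eventually_lintegral_le {f : ℝ → ℝ} (hfc : Continuous f) (hf1 : Cond_f1 f)
    (hf2 : Cond_f2 f) {u : ℕ → R2 → ℝ} (hmem : ∀ n, MemH1 (u n)) (hpos : ∀ n x, 0 ≤ u n x)
    {M : ℝ} (hM : ∀ n, H1norm (u n) ≤ M)
    (hgrad : Filter.limsup (fun n => ∫ x, ‖gradient (u n) x‖ ^ 2) atTop < 1)
    {R : ℝ} (hR : 0 < R)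
    (hvan : ∀ δ > (0:ℝ), ∃ N : ℕ, ∀ n ≥ N, ∀ z : R2, (∫ x in ball z R, (u n x) ^ 2) ≤ δ)
    {e : ℝ} (he : 0 < e) :
    ∀ᶠ n in atTop, ∫⁻ x, ENNReal.ofReal (f (u n x) * u n x) ≤ ENNReal.ofReal e := by
  have hsq : ∀ n, H1normSq (u n) ≤ M ^ 2 := fun n => (Real.sqrt_le_iff.1 (hM n)).2
  have hsplit : ∀ n, H1normSq (u n) = (∫ x, ‖gradient (u n) x‖ ^ 2) + ∫ x, (u n x) ^ 2 :=
    fun n => integral_add (hmem n).2.2 (hmem n).2.1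
  have hg0 : ∀ n, 0 ≤ ∫ x, ‖gradient (u n) x‖ ^ 2 :=
    fun n => integral_nonneg fun x => sq_nonneg _
  have hu0 : ∀ n, 0 ≤ ∫ x, (u n x) ^ 2 := fun n => integral_nonneg fun x => sq_nonneg _
  have huM : ∀ n, ∫ x, (u n x) ^ 2 ≤ M ^ 2 := fun n => by linarith [hsq n, hsplit n, hg0 n]
  have hgM : ∀ n, ∫ x, ‖gradient (u n) x‖ ^ 2 ≤ M ^ 2 :=
    fun n => by linarith [hsq n, hsplit n, hu0 n]
  obtain ⟨m, hm1, hm2⟩ := exists_between hgrad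
  have hev : ∀ᶠ n in atTop, ∫ x, ‖gradient (u n) x‖ ^ 2 < m :=
    eventually_lt_of_limsup_lt hm1 ⟨M ^ 2, by simpa using ⟨0, fun n _ => hgM n⟩⟩
  have hm0 : 0 ≤ m := by
    obtain ⟨n, hn⟩ := hev.exists
    exact (hg0 n).trans hn.le
  -- By Bernoulli's inequality this `q < 1` satisfies `m < q ^ 4`.
  set q := 1 - (1 - m) / 8 with hq
  have hq1 : q < 1 := by linarith
  have hq2 : 1 / 2 ≤ q := by linarith
  have hq0 : 0 < q := by linarith
  have hmq : m < q ^ 4 := by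
    have := one_add_mul_le_pow (show (-2:ℝ) ≤ -((1 - m) / 8) by linarith) 4
    push_cast at this
    rw [hq, sub_eq_add_neg]; linarith
  have hα : 4 * π < 4 * π / q := by
    rw [lt_div_iff₀ hq0]; nlinarith [pi_pos]
  obtain ⟨s₀, C, hs₀, hC, hgrow⟩ := growth_bound hfc hf1 hf2 hα (ε := e / (3 * (M ^ 2 + 1)))
    (by positivity)
  set β := 2 * q with hβ
  have hβ2 : 0 < 2 - β := by linarith
  set K := 2 * π * (R ^ (2 - β) / (2 - β)) * m with hK
  have hK0 : 0 ≤ K := by positivity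
  obtain ⟨C₂, hC₂, hexp⟩ := exp_sq_le_gradPot hq0 hq2 hq1 hm0 hmq hR
    (κ := e / (3 * (C + 1) * (K + 1))) (by positivity)
  set κ := e / (3 * (C + 1) * (K + 1)) with hκ
  have hκ0 : 0 < κ := by positivity
  set ω := e / (3 * (C + 1) * (C₂ + 1)) with hω
  have hω0 : 0 < ω := by positivity
  -- A disc radius `D` at which the measure of the superlevel set is at most `ω`.
  obtain ⟨D, hD0, hDR, hDω⟩ : ∃ D : ℝ, 0 < D ∧ D ≤ R ∧ 8 * m / s₀ ^ 2 * D ^ 2 ≤ ω := by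
    have ht : Tendsto (fun D : ℝ => 8 * m / s₀ ^ 2 * D ^ 2) (𝓝[>] 0) (𝓝 0) := by
      have : Tendsto (fun D : ℝ => 8 * m / s₀ ^ 2 * D ^ 2) (𝓝 0) (𝓝 (8 * m / s₀ ^ 2 * 0 ^ 2)) :=
        Continuous.tendsto (by fun_prop) 0
      simpa using this.mono_left nhdsWithin_le_nhds
    have h1 := ht.eventually (gt_mem_nhds hω0)
    have h2 : ∀ᶠ D in 𝓝[>] (0:ℝ), D ∈ Ioc 0 R := Ioc_mem_nhdsGT hR
    obtain ⟨D, hD1, hD2⟩ := (h1.and h2).exists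
    exact ⟨D, hD2.1, hD2.2, hD1.le⟩
  have hv1 := eventually_atTop.2 (hvan (π * D ^ 2 * (s₀ / 2) ^ 2) (by positivity))
  have hv2 := eventually_atTop.2 (hvan (π * R ^ 2 * 1 ^ 2) (by positivity))
  filter_upwards [hev, hv1, hv2] with n hn hn1 hn2
  obtain ⟨hdiff, hi, hgi⟩ := hmem n
  have hcont := hdiff.continuous
  have hgr : ∫⁻ x, ‖fderiv ℝ (u n) x‖ₑ ^ 2 ≤ ENNReal.ofReal m := by
    have h1 : ∀ x, ‖fderiv ℝ (u n) x‖ₑ ^ 2 = ENNReal.ofReal (‖gradient (u n) x‖ ^ 2) := by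
      intro x
      rw [gradient, LinearIsometryEquiv.norm_map, ENNReal.ofReal_pow (norm_nonneg _), ofReal_norm]
    rw [lintegral_congr h1, ← ofReal_integral_eq_lintegral_ofReal hgi
      (Eventually.of_forall fun x => sq_nonneg _)]
    exact ENNReal.ofReal_le_ofReal hn.le
  have hE := (volume_superlevel_le hdiff hD0 hm0 hs₀ hgr fun x =>
    mean_le_of_sq hdiff hi hD0 hDR (by positivity) x (hn1 x)).trans (ENNReal.ofReal_le_ofReal hDω)
  set E := {x | s₀ ≤ |u n x|} with hEdef
  have hEm : MeasurableSet E := measurableSet_le measurable_const hcont.abs.measurable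
  have hmH := measurable_gradPot (u n) β R
  have hpt : ∀ x, ENNReal.ofReal (f (u n x) * u n x) ≤
      ENNReal.ofReal (e / (3 * (M ^ 2 + 1))) * ENNReal.ofReal (u n x ^ 2) +
      E.indicator (fun x => ENNReal.ofReal C * (ENNReal.ofReal κ * gradPot (u n) β R x +
        ENNReal.ofReal C₂)) x := by
    intro x
    by_cases hx : s₀ ≤ u n x
    · have hxE : x ∈ E := by simpa [hEdef, abs_of_nonneg (hpos n x)] using hx
      rw [indicator_of_mem hxE]
      refine le_add_left ?_
      refine (ENNReal.ofReal_le_ofReal ((hgrow _ (hpos n x)).2 hx)).trans ?_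
      rw [ENNReal.ofReal_mul hC]
      gcongr
      exact hexp (u n) hdiff hgr x (mean_le_of_sq hdiff hi hR le_rfl one_pos x (hn2 x))
    · refine le_add_right ?_
      rw [← ENNReal.ofReal_mul (by positivity)]
      exact ENNReal.ofReal_le_ofReal ((hgrow _ (hpos n x)).1 (not_le.1 hx))
  have hL2 : ∫⁻ x, ENNReal.ofReal (u n x ^ 2) ≤ ENNReal.ofReal (M ^ 2) := by
    rw [← ofReal_integral_eq_lintegral_ofReal hi (Eventually.of_forall fun x => sq_nonneg _)]
    exact ENNReal.ofReal_le_ofReal (huM n)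
  have hLH : ∫⁻ x, gradPot (u n) β R x ≤ ENNReal.ofReal K := by
    rw [lintegral_gradPot (by linarith) hR, hK,
      ENNReal.ofReal_mul (p := 2 * π * (R ^ (2 - β) / (2 - β))) (by positivity)]
    gcongr
  calc _ ≤ _ := lintegral_mono hpt
    _ = ENNReal.ofReal (e / (3 * (M ^ 2 + 1))) * (∫⁻ x, ENNReal.ofReal (u n x ^ 2)) +
        ENNReal.ofReal C * (ENNReal.ofReal κ * (∫⁻ x in E, gradPot (u n) β R x) +
          ENNReal.ofReal C₂ * volume E) := by
      have hm1 : Measurable fun x => ENNReal.ofReal (u n x ^ 2) :=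
        (hcont.pow 2).measurable.ennreal_ofReal
      rw [lintegral_add_left (hm1.const_mul _), lintegral_const_mul _ hm1,
        lintegral_indicator hEm, lintegral_const_mul _ ((hmH.const_mul _).add_const _),
        lintegral_add_left (hmH.const_mul _), lintegral_const_mul _ hmH, setLIntegral_const]
    _ ≤ ENNReal.ofReal (e / (3 * (M ^ 2 + 1))) * ENNReal.ofReal (M ^ 2) +
        ENNReal.ofReal C * (ENNReal.ofReal κ * ENNReal.ofReal K +
          ENNReal.ofReal C₂ * ENNReal.ofReal ω) := by
      gcongr
      exact (setLIntegral_le_lintegral _ _).trans hLH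
    _ = ENNReal.ofReal (e / (3 * (M ^ 2 + 1)) * M ^ 2 + C * (κ * K + C₂ * ω)) := by
      rw [← ENNReal.ofReal_mul (by positivity), ← ENNReal.ofReal_mul (by positivity),
        ← ENNReal.ofReal_mul (by positivity), ← ENNReal.ofReal_add (by positivity) (by positivity),
        ← ENNReal.ofReal_mul (by positivity), ← ENNReal.ofReal_add (by positivity) (by positivity)]
    _ ≤ ENNReal.ofReal e := by
      apply ENNReal.ofReal_le_ofReal
      have h1 : e / (3 * (M ^ 2 + 1)) * M ^ 2 ≤ e / 3 := by
        rw [div_mul_eq_mul_div, div_le_div_iff₀ (by positivity) (by norm_num)]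
        nlinarith
      have h2 : C * (κ * K) ≤ e / 3 := by
        have : (C + 1) * (κ * (K + 1)) = e / 3 := by rw [hκ]; field_simp
        rw [← this]; gcongr <;> linarith
      have h3 : C * (C₂ * ω) ≤ e / 3 := by
        have : (C + 1) * ((C₂ + 1) * ω) = e / 3 := by rw [hω]; field_simp
        rw [← this]; gcongr <;> linarith
      linarith [mul_add C (κ * K) (C₂ * ω)]

/-- Lemma 6.7: Lions-type vanishing lemma. -/
theorem statement9 (f : ℝ → ℝ) (hfc : Continuous f) (μ : ℝ) (hμ : 2 < μ)
    (hf1 : Cond_f1 f) (hf2 : Cond_f2 f) (hf3 : Cond_f3 f μ)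
    (u : ℕ → R2 → ℝ) (hmem : ∀ n, MemH1 (u n)) (hpos : ∀ n x, 0 ≤ u n x)
    (M : ℝ) (hM : ∀ n, H1norm (u n) ≤ M)
    (hgrad : Filter.limsup (fun n => ∫ x, ‖gradient (u n) x‖ ^ 2) atTop < 1)
    (R : ℝ) (hR : 0 < R)
    (hvan : ∀ δ > (0:ℝ), ∃ N : ℕ, ∀ n ≥ N, ∀ z : R2, (∫ x in ball z R, (u n x) ^ 2) ≤ δ) :
    Tendsto (fun n => ∫ x, Primitive f (u n x)) atTop (𝓝 0) ∧
    Tendsto (fun n => ∫ x, f (u n x) * u n x) atTop (𝓝 0) := by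
  have hF0 : Primitive f 0 = 0 := intervalIntegral.integral_same
  have hFc : Continuous (Primitive f) :=
    intervalIntegral.continuous_primitive (fun a b => hfc.intervalIntegrable a b) 0
  have hF : ∀ t, 0 ≤ Primitive f t ∧ Primitive f t ≤ f t * t := by
    intro t
    rcases eq_or_ne t 0 with rfl | ht
    · simp [hF0]
    · obtain ⟨h1, h2⟩ := hf3 t ht
      exact ⟨h2.le, by nlinarith⟩
  have hsmall := fun (e : ℝ) (he : 0 < e) =>
    eventually_lintegral_le hfc hf1 hf2 hmem hpos hM hgrad hR hvan he
  have hcu : ∀ n, Continuous (u n) := fun n => (hmem n).1.continuous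
  constructor
  · refine tendsto_integral_of_lintegral_small (fun n => hFc.comp (hcu n))
      (fun n x => (hF _).1) fun e he => ?_
    filter_upwards [hsmall e he] with n hn
    exact (lintegral_mono fun x => ENNReal.ofReal_le_ofReal (hF _).2).trans hn
  · exact tendsto_integral_of_lintegral_small (fun n => (hfc.comp (hcu n)).mul (hcu n))
      (fun n x => (hF _).1.trans (hF _).2) hsmall
end
end
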